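/- Fix an integer d ≥ 3 and a real p with 1/(d-1) < p < 1, and let q ∈ [0,1) satisfy q = (1-p+pq)^{d-1}. For 2 ≤ k ≤ d define β_k = C(d,k) p^k (1−q)^k q / (1−p+pq)^{k−1}. Then for every ε > 0 and b > 0 there exist c, R > 0 such that: if 𝒢 is a regular (b,d)-expander on n vertices with girth at least R, then with probability at least 1 − exp(−c n), the random graph G ∼ 𝒢_p satisfies | D*_k/n − β_k | < ε for every 2 ≤ k ≤ d, where D*_k is the number of vertices of degree exactly k in the 2-core C₁^{(2)}(G) of a largest connected component of G (degrees taken in the 2-core). -/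

import Mathlib

open scoped Classical symmDiff

noncomputable section

namespace Percolation

variable {V : Type} [Fintype V] [DecidableEq V]

/-- The edge set of `G` as a finset. -/
noncomputable def edgeFinset' (G : SimpleGraph V) : Finset (Sym2 V) :=
  Finset.univ.filter (· ∈ G.edgeSet)

/-- Probability that bond percolation on `G` with parameter `p` produces a spanning
subgraph satisfying `P`. -/
noncomputable def percProb (G : SimpleGraph V) (p : ℝ) (P : SimpleGraph V → Prop) : ℝ :=
  ∑ s ∈ (edgeFinset' G).powerset,
    (p ^ s.card * (1 - p) ^ ((edgeFinset' G).card - s.card)) *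
      (if P (SimpleGraph.fromEdgeSet (↑s)) then 1 else 0)

/-- Joint probability for two independent bond percolations on `G`. -/
noncomputable def percProb2 (G : SimpleGraph V) (p₁ p₂ : ℝ)
    (P : SimpleGraph V → SimpleGraph V → Prop) : ℝ :=
  ∑ s ∈ (edgeFinset' G).powerset, ∑ t ∈ (edgeFinset' G).powerset,
    (p₁ ^ s.card * (1 - p₁) ^ ((edgeFinset' G).card - s.card)) *
    (p₂ ^ t.card * (1 - p₂) ^ ((edgeFinset' G).card - t.card)) *
      (if P (SimpleGraph.fromEdgeSet (↑s)) (SimpleGraph.fromEdgeSet (↑t)) then 1 else 0)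

/-- Number of edges of `G` joining `S` to its complement. -/
noncomputable def cutCard (G : SimpleGraph V) (S : Finset V) : ℕ :=
  ((edgeFinset' G).filter (fun e => ∃ x ∈ S, ∃ y, y ∉ S ∧ e = s(x, y))).card

/-- `G` is a `(b,d)`-expander: max degree at most `d`, and every vertex set of size at most
`n/2` has at least `b|S|` edges to its complement. -/
def IsExpander (G : SimpleGraph V) (b : ℝ) (d : ℕ) : Prop :=
  (∀ v, (G.neighborSet v).ncard ≤ d) ∧
  ∀ S : Finset V, (S.card : ℝ) ≤ Fintype.card V / 2 → b * S.card ≤ cutCard G S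

/-- `G` is a regular `(b,d)`-expander. -/
def IsRegularExpander (G : SimpleGraph V) (b : ℝ) (d : ℕ) : Prop :=
  IsExpander G b d ∧ ∀ v, (G.neighborSet v).ncard = d

/-- The vertices of the connected component `c` of `G`. -/
noncomputable def compVerts (G : SimpleGraph V) (c : G.ConnectedComponent) : Finset V :=
  Finset.univ.filter (fun v => G.connectedComponentMk v = c)

/-- The edges of the connected component `c` of `G`. -/
noncomputable def compEdges (G : SimpleGraph V) (c : G.ConnectedComponent) : Finset (Sym2 V) :=
  (edgeFinset' G).filter (fun e => ∀ v ∈ e, G.connectedComponentMk v = c)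

/-- `c` is a largest connected component of `G`. -/
def IsLargestComp (G : SimpleGraph V) (c : G.ConnectedComponent) : Prop :=
  ∀ c' : G.ConnectedComponent, (compVerts G c').card ≤ (compVerts G c).card

/-- The 2-core of the connected component `c` of `G` : the maximal subgraph of `G`
supported inside `c` all of whose vertices have degree at least 2. -/
noncomputable def twoCoreComp (G : SimpleGraph V) (c : G.ConnectedComponent) : SimpleGraph V :=
  sSup {H : SimpleGraph V | H ≤ G ∧ (∀ v ∈ H.support, G.connectedComponentMk v = c) ∧
    ∀ v ∈ H.support, 2 ≤ (H.neighborSet v).ncard}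

/-- The event `A^R_{x,y}(H)`: the connected component of `y` in `H` with the edge `xy`
removed (if present) has at least `R` vertices. -/
def eventA (H : SimpleGraph V) (R : ℕ) (x y : V) : Prop :=
  R ≤ (compVerts (H.deleteEdges {s(x, y)})
        ((H.deleteEdges {s(x, y)}).connectedComponentMk y)).card

/-- `E₁(H)`: edges `xy` of `H` such that `A^R_{x,y}` or `A^R_{y,x}` holds. -/
noncomputable def E1set (H : SimpleGraph V) (R : ℕ) : Finset (Sym2 V) :=
  (edgeFinset' H).filter (fun e => ∃ x y, e = s(x, y) ∧ (eventA H R x y ∨ eventA H R y x))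

/-- `V₁(H)`: vertices `x` such that for some `y`, `xy ∈ E(H)` and `A^R_{x,y}` holds. -/
noncomputable def V1set (H : SimpleGraph V) (R : ℕ) : Finset V :=
  Finset.univ.filter (fun x => ∃ y, H.Adj x y ∧ eventA H R x y)

/-- `E₂(H)`: edges `xy` of `H` such that both `A^R_{x,y}` and `A^R_{y,x}` hold. -/
noncomputable def E2set (H : SimpleGraph V) (R : ℕ) : Finset (Sym2 V) :=
  (edgeFinset' H).filter (fun e => ∃ x y, e = s(x, y) ∧ eventA H R x y ∧ eventA H R y x)

/-- `V₂(H)`: vertices incident to an edge of `E₂(H)`. -/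
noncomputable def V2set (H : SimpleGraph V) (R : ℕ) : Finset V :=
  Finset.univ.filter (fun x => ∃ e ∈ E2set H R, x ∈ e)

/-- `V̄₁(H)`: vertices `y` such that `A^R_{x,y}(H)` holds for some `x`. -/
noncomputable def Vbar1 (H : SimpleGraph V) (R : ℕ) : Finset V :=
  Finset.univ.filter (fun y => ∃ x, eventA H R x y)

/-- `S` is `k`-thick in `H`: a union of pairwise disjoint subsets, each of size at least
`k`, each inducing a connected subgraph of `H`. -/
def IsThick (H : SimpleGraph V) (k : ℕ) (S : Finset V) : Prop :=
  ∃ P : Finset (Finset V),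
    (∀ T ∈ P, k ≤ T.card ∧ (H.induce (↑T : Set V)).Connected) ∧
    (↑P : Set (Finset V)).PairwiseDisjoint id ∧ S = P.biUnion id

/-- `S` is a separator of `K`. -/
def IsSeparator {W : Type} [Fintype W] (K : SimpleGraph W) (S : Finset W) : Prop :=
  ∃ A B : Finset W, Disjoint A B ∧ Disjoint A S ∧ Disjoint B S ∧
    (∀ w, w ∈ A ∨ w ∈ B ∨ w ∈ S) ∧
    (∀ a ∈ A, ∀ b ∈ B, ¬ K.Adj a b) ∧
    3 * A.card ≤ 2 * Fintype.card W ∧ 3 * B.card ≤ 2 * Fintype.card W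

set_option linter.unusedSectionVars false

section ProductExpectation

variable {α : Type*} [DecidableEq α]

/-- Expectation of `f` over the random subset of `E` containing each element independently
with probability `p`. -/
def bexp (p : ℝ) (E : Finset α) (f : Finset α → ℝ) : ℝ :=
  ∑ s ∈ E.powerset, p ^ s.card * (1 - p) ^ (E.card - s.card) * f s

/-- The value of `f` at `s` is determined by `s ∩ A`. -/
def OnlyOn (A : Finset α) (f : Finset α → ℝ) : Prop := ∀ s, f (s ∩ A) = f s

lemma bexp_empty (p : ℝ) (f : Finset α → ℝ) : bexp p ∅ f = f ∅ := by simp [bexp]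

lemma bexp_insert (p : ℝ) {E : Finset α} {e : α} (he : e ∉ E) (f : Finset α → ℝ) :
    bexp p (insert e E) f
      = (1 - p) * bexp p E f + p * bexp p E (fun s => f (insert e s)) := by
  unfold bexp
  rw [Finset.sum_powerset_insert he, Finset.mul_sum, Finset.mul_sum]
  congr 1
  · refine Finset.sum_congr rfl fun s hs => ?_
    have h := Finset.card_le_card (Finset.mem_powerset.1 hs)
    rw [Finset.card_insert_of_notMem he, Nat.sub_add_comm h, pow_succ]
    ring
  · refine Finset.sum_congr rfl fun s hs => ?_
    have hes : e ∉ s := fun h => he (Finset.mem_powerset.1 hs h)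
    rw [Finset.card_insert_of_notMem he, Finset.card_insert_of_notMem hes,
      Nat.add_sub_add_right, pow_succ]
    ring

lemma bexp_add (p : ℝ) (E : Finset α) (f g : Finset α → ℝ) :
    bexp p E (fun s => f s + g s) = bexp p E f + bexp p E g := by
  simp only [bexp, mul_add, Finset.sum_add_distrib]

lemma bexp_const_mul (p : ℝ) (E : Finset α) (a : ℝ) (f : Finset α → ℝ) :
    bexp p E (fun s => a * f s) = a * bexp p E f := by
  simp only [bexp, Finset.mul_sum]
  exact Finset.sum_congr rfl fun s _ => by ring

lemma bexp_neg (p : ℝ) (E : Finset α) (f : Finset α → ℝ) :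
    bexp p E (fun s => - f s) = - bexp p E f := by
  simp [bexp]

lemma bexp_sum {ι : Type*} (p : ℝ) (E : Finset α) (I : Finset ι) (f : ι → Finset α → ℝ) :
    bexp p E (fun s => ∑ i ∈ I, f i s) = ∑ i ∈ I, bexp p E (f i) := by
  simp only [bexp, Finset.mul_sum]
  exact Finset.sum_comm

lemma bexp_congr (p : ℝ) {E : Finset α} {f g : Finset α → ℝ} (h : ∀ s ⊆ E, f s = g s) :
    bexp p E f = bexp p E g :=
  Finset.sum_congr rfl fun s hs => by rw [h s (Finset.mem_powerset.1 hs)]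

lemma bexp_const (p : ℝ) (E : Finset α) (a : ℝ) : bexp p E (fun _ => a) = a := by
  induction E using Finset.induction_on with
  | empty => simp [bexp_empty]
  | insert e E he ih => rw [bexp_insert p he, ih]; ring

lemma bexp_mono {p : ℝ} (h0 : 0 ≤ p) (h1 : p ≤ 1) {E : Finset α} {f g : Finset α → ℝ}
    (h : ∀ s ⊆ E, f s ≤ g s) : bexp p E f ≤ bexp p E g := by
  refine Finset.sum_le_sum fun s hs => mul_le_mul_of_nonneg_left (h s (Finset.mem_powerset.1 hs)) ?_
  have : 0 ≤ 1 - p := by linarith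
  positivity

lemma bexp_nonneg {p : ℝ} (h0 : 0 ≤ p) (h1 : p ≤ 1) {E : Finset α} {f : Finset α → ℝ}
    (h : ∀ s ⊆ E, 0 ≤ f s) : 0 ≤ bexp p E f := by
  simpa [bexp_const] using bexp_mono h0 h1 (f := fun _ => 0) h

/-- Two independent random subsets with retention probabilities `p₁` and `p₂` have as union
a random subset with retention probability `p`. -/
lemma bexp_sprinkle {p p₁ p₂ : ℝ} (h : 1 - p = (1 - p₁) * (1 - p₂)) (E : Finset α)
    (f : Finset α → ℝ) :
    bexp p E f = bexp p₁ E (fun s => bexp p₂ E (fun t => f (s ∪ t))) := by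
  induction E using Finset.induction_on generalizing f with
  | empty => simp [bexp_empty]
  | insert e E he ih =>
    simp only [bexp_insert _ he, bexp_add, bexp_const_mul, ih, Finset.insert_union,
      Finset.union_insert, Finset.insert_idem]
    have hp : p = 1 - (1 - p₁) * (1 - p₂) := by linarith
    rw [hp]
    ring

lemma OnlyOn.insert_of_notMem {A : Finset α} {f : Finset α → ℝ} (hf : OnlyOn A f) {e : α}
    (he : e ∉ A) (s : Finset α) : f (insert e s) = f s := by
  rw [← hf (insert e s), Finset.insert_inter_of_notMem he, hf]

lemma OnlyOn.comp_insert {A : Finset α} {f : Finset α → ℝ} (hf : OnlyOn A f) (e : α) :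
    OnlyOn A (fun s => f (insert e s)) := by
  intro s
  change f (insert e (s ∩ A)) = f (insert e s)
  rw [← hf (insert e (s ∩ A)), ← hf (insert e s)]
  congr 1
  ext x
  simp only [Finset.mem_inter, Finset.mem_insert]
  tauto

lemma OnlyOn.mono {A B : Finset α} {f : Finset α → ℝ} (hf : OnlyOn A f) (h : A ⊆ B) :
    OnlyOn B f := by
  intro s
  rw [← hf (s ∩ B), ← hf s, Finset.inter_assoc, Finset.inter_eq_right.2 h]

lemma OnlyOn.mul {A B : Finset α} {f g : Finset α → ℝ} (hf : OnlyOn A f) (hg : OnlyOn B g) :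
    OnlyOn (A ∪ B) (fun s => f s * g s) := by
  intro s
  change f _ * g _ = _
  rw [hf.mono Finset.subset_union_left s, hg.mono Finset.subset_union_right s]

lemma bexp_mul_of_disjoint (p : ℝ) (E : Finset α) {A B : Finset α} (hAB : Disjoint A B)
    {f g : Finset α → ℝ} (hf : OnlyOn A f) (hg : OnlyOn B g) :
    bexp p E (fun s => f s * g s) = bexp p E f * bexp p E g := by
  induction E using Finset.induction_on generalizing f g with
  | empty => simp [bexp_empty]
  | insert e E he ih =>
    simp only [bexp_insert _ he]
    by_cases hA : e ∈ A
    · have hB : e ∉ B := Finset.disjoint_left.1 hAB hA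
      simp only [hg.insert_of_notMem hB]
      rw [ih hf hg, ih (hf.comp_insert e) hg]
      ring
    · simp only [hf.insert_of_notMem hA]
      rw [ih hf hg, ih hf (hg.comp_insert e)]
      ring

lemma OnlyOn.prod {ι : Type*} (I : Finset ι) {A : ι → Finset α} {f : ι → Finset α → ℝ}
    (hf : ∀ i ∈ I, OnlyOn (A i) (f i)) : OnlyOn (I.biUnion A) (fun s => ∏ i ∈ I, f i s) :=
  fun s => Finset.prod_congr rfl fun i hi =>
    (hf i hi).mono (Finset.subset_biUnion_of_mem A hi) s

lemma bexp_prod_of_disjoint {ι : Type*} (p : ℝ) (E : Finset α) (I : Finset ι)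
    {A : ι → Finset α} {f : ι → Finset α → ℝ} (hf : ∀ i ∈ I, OnlyOn (A i) (f i))
    (hA : ∀ i ∈ I, ∀ j ∈ I, i ≠ j → Disjoint (A i) (A j)) :
    bexp p E (fun s => ∏ i ∈ I, f i s) = ∏ i ∈ I, bexp p E (f i) := by
  induction I using Finset.induction_on with
  | empty => simp [bexp_const]
  | insert i I hi ih =>
    simp only [Finset.prod_insert hi]
    rw [← ih (fun j hj => hf j (Finset.mem_insert_of_mem hj)) fun j hj k hk =>
      hA j (Finset.mem_insert_of_mem hj) k (Finset.mem_insert_of_mem hk)]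
    refine bexp_mul_of_disjoint p E ?_ (hf i (Finset.mem_insert_self i I))
      (OnlyOn.prod I fun j hj => hf j (Finset.mem_insert_of_mem hj))
    rw [Finset.disjoint_biUnion_right]
    intro j hj
    exact hA i (Finset.mem_insert_self i I) j (Finset.mem_insert_of_mem hj)
      (fun h => hi (h ▸ hj))

lemma onlyOn_mem (e : α) : OnlyOn {e} (fun s => if e ∈ s then (1 : ℝ) else 0) := by
  intro s
  simp

lemma bexp_mem (p : ℝ) {E : Finset α} {e : α} (he : e ∈ E) :
    bexp p E (fun s => if e ∈ s then (1 : ℝ) else 0) = p := by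
  obtain ⟨E', he', rfl⟩ : ∃ E', e ∉ E' ∧ insert e E' = E :=
    ⟨E.erase e, Finset.notMem_erase e E, Finset.insert_erase he⟩
  rw [bexp_insert p he']
  have h : bexp p E' (fun s => if e ∈ s then (1 : ℝ) else 0) = 0 := by
    rw [bexp_congr p (g := fun _ => 0) (fun s hs => if_neg fun h => he' (hs h)), bexp_const]
  rw [h]
  simp [bexp_const]

lemma bexp_subset (p : ℝ) {E Q : Finset α} (hQ : Q ⊆ E) :
    bexp p E (fun s => if Q ⊆ s then (1 : ℝ) else 0) = p ^ Q.card := by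
  have h : ∀ s ⊆ E, (if Q ⊆ s then (1 : ℝ) else 0) = ∏ e ∈ Q, if e ∈ s then (1 : ℝ) else 0 := by
    intro s _
    by_cases hs : Q ⊆ s
    · rw [if_pos hs, Finset.prod_congr rfl fun e he => if_pos (hs he)]; simp
    · obtain ⟨e, he, hes⟩ := Finset.not_subset.1 hs
      rw [if_neg hs, Finset.prod_eq_zero he (if_neg hes)]
  rw [bexp_congr p h, bexp_prod_of_disjoint p E Q (fun e _ => onlyOn_mem e) (by simp),
    Finset.prod_congr rfl fun e he => bexp_mem p (hQ he)]
  simp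

lemma exp_two_point {p a b c : ℝ} (h0 : 0 ≤ p) (h1 : p ≤ 1) (hab : |b - a| ≤ c) (hc : c ≤ 1) :
    (1 - p) * Real.exp a + p * Real.exp b
      ≤ Real.exp ((1 - p) * a + p * b + c ^ 2) := by
  have habs := abs_le.1 hab
  have hc0 : 0 ≤ c := (abs_nonneg _).trans hab
  set m := (1 - p) * a + p * b with hm
  have ha : |a - m| ≤ c := by
    have : a - m = -(p * (b - a)) := by rw [hm]; ring
    rw [this, abs_neg, abs_mul, abs_of_nonneg h0]
    nlinarith [abs_nonneg (b - a)]
  have hb : |b - m| ≤ c := by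
    have : b - m = (1 - p) * (b - a) := by rw [hm]; ring
    rw [this, abs_mul, abs_of_nonneg (by linarith : 0 ≤ 1 - p)]
    nlinarith [abs_nonneg (b - a)]
  have key : ∀ x, |x| ≤ c → Real.exp x ≤ 1 + x + c ^ 2 := by
    intro x hx
    have := (abs_le.1 (Real.abs_exp_sub_one_sub_id_le (hx.trans hc))).2
    have hx2 : x ^ 2 ≤ c ^ 2 := by rw [← sq_abs]; gcongr
    linarith
  have ea : Real.exp a = Real.exp m * Real.exp (a - m) := by rw [← Real.exp_add]; ring_nf
  have eb : Real.exp b = Real.exp m * Real.exp (b - m) := by rw [← Real.exp_add]; ring_nf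
  rw [ea, eb, Real.exp_add m]
  have h2 : (1 - p) * Real.exp (a - m) + p * Real.exp (b - m) ≤ 1 + c ^ 2 := by
    have h3 := mul_le_mul_of_nonneg_left (key _ ha) (by linarith : 0 ≤ 1 - p)
    have h4 := mul_le_mul_of_nonneg_left (key _ hb) h0
    have : (1 - p) * (1 + (a - m) + c ^ 2) + p * (1 + (b - m) + c ^ 2) = 1 + c ^ 2 := by
      rw [hm]; ring
    linarith
  have h5 : 1 + c ^ 2 ≤ Real.exp (c ^ 2) := by linarith [Real.add_one_le_exp (c ^ 2)]
  have := mul_le_mul_of_nonneg_left (h2.trans h5) (Real.exp_pos m).le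
  linarith

/-- Exponential moment bound for functions with bounded differences. -/
lemma bexp_exp_le {p c : ℝ} (h0 : 0 ≤ p) (h1 : p ≤ 1) (hc : c ≤ 1) (E : Finset α)
    (f : Finset α → ℝ) (hf : ∀ e ∈ E, ∀ s ⊆ E, |f (insert e s) - f s| ≤ c) :
    bexp p E (fun s => Real.exp (f s)) ≤ Real.exp (bexp p E f + c ^ 2 * E.card) := by
  induction E using Finset.induction_on generalizing f with
  | empty => simp [bexp_empty]
  | insert e E he ih =>
    rw [bexp_insert p he, bexp_insert p he]
    have i1 := ih f fun e' he' s hs => hf e' (Finset.mem_insert_of_mem he') s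
      (hs.trans (Finset.subset_insert e E))
    have i2 := ih (fun s => f (insert e s)) fun e' he' s hs => by
      rw [Finset.insert_comm]
      exact hf e' (Finset.mem_insert_of_mem he') _ (Finset.insert_subset_insert e hs)
    have hdiff : |bexp p E (fun s => f (insert e s)) - bexp p E f| ≤ c := by
      have hsub : bexp p E (fun s => f (insert e s)) - bexp p E f
          = bexp p E (fun s => f (insert e s) - f s) := by
        have := bexp_add p E (fun s => f (insert e s)) (fun s => - f s)
        rw [bexp_neg] at this
        simpa [sub_eq_add_neg] using this.symm
      have hb : ∀ s ⊆ E, |f (insert e s) - f s| ≤ c := fun s hs =>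
        hf e (Finset.mem_insert_self e E) s (hs.trans (Finset.subset_insert e E))
      rw [hsub, abs_le]
      constructor
      · rw [← bexp_const p E (-c)]
        exact bexp_mono h0 h1 fun s hs => (abs_le.1 (hb s hs)).1
      · rw [← bexp_const p E c]
        exact bexp_mono h0 h1 fun s hs => (abs_le.1 (hb s hs)).2
    have h2 := exp_two_point h0 h1 hdiff hc
    rw [Real.exp_add] at i1 i2
    rw [Finset.card_insert_of_notMem he]
    push_cast
    calc _ ≤ (1 - p) * (Real.exp (bexp p E f) * Real.exp (c ^ 2 * E.card))
          + p * (Real.exp (bexp p E fun s => f (insert e s)) * Real.exp (c ^ 2 * E.card)) :=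
        add_le_add (mul_le_mul_of_nonneg_left i1 (by linarith))
          (mul_le_mul_of_nonneg_left i2 h0)
      _ = ((1 - p) * Real.exp (bexp p E f)
          + p * Real.exp (bexp p E fun s => f (insert e s))) * Real.exp (c ^ 2 * E.card) := by ring
      _ ≤ _ := by
        refine (mul_le_mul_of_nonneg_right h2 (Real.exp_pos _).le).trans_eq ?_
        rw [← Real.exp_add]
        ring_nf

/-- Upper tail bound for functions with bounded differences. -/
lemma bexp_tail_le {p c l a : ℝ} (h0 : 0 ≤ p) (h1 : p ≤ 1) (hl : 0 ≤ l) (hc : l * c ≤ 1)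
    (E : Finset α) (f : Finset α → ℝ) (hf : ∀ e ∈ E, ∀ s ⊆ E, |f (insert e s) - f s| ≤ c) :
    bexp p E (fun s => if bexp p E f + a ≤ f s then 1 else 0)
      ≤ Real.exp ((l * c) ^ 2 * E.card - l * a) := by
  have h := bexp_exp_le h0 h1 hc E (fun s => l * f s) fun e he s hs => by
    rw [← mul_sub, abs_mul, abs_of_nonneg hl]
    exact mul_le_mul_of_nonneg_left (hf e he s hs) hl
  rw [bexp_const_mul] at h
  calc _ ≤ bexp p E (fun s => Real.exp (-(l * (bexp p E f + a))) * Real.exp (l * f s)) := by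
        refine bexp_mono h0 h1 fun s _ => ?_
        rw [← Real.exp_add]
        split_ifs with hs
        · have := mul_le_mul_of_nonneg_left hs hl
          exact Real.one_le_exp (by linarith)
        · exact (Real.exp_pos _).le
    _ ≤ _ := by
        rw [bexp_const_mul]
        refine (mul_le_mul_of_nonneg_left h (Real.exp_pos _).le).trans_eq ?_
        rw [← Real.exp_add]
        ring_nf

/-- A set of `N` elements has few subsets of small size. -/
lemma card_small_subsets_le (E : Finset α) (m : ℝ) {x : ℝ} (hx0 : 0 < x) (hx1 : x ≤ 1) :
    ((E.powerset.filter fun F => (F.card : ℝ) ≤ m).card : ℝ)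
      ≤ Real.exp (x * E.card - m * Real.log x) := by
  have h1 : ∑ F ∈ E.powerset, x ^ F.card = (1 + x) ^ E.card := by
    have := Finset.sum_pow_mul_eq_add_pow x 1 E
    simpa [add_comm] using this
  have h2 : ∀ F ∈ E.powerset.filter (fun F => (F.card : ℝ) ≤ m),
      Real.exp (m * Real.log x) ≤ x ^ F.card := by
    intro F hF
    have hF := (Finset.mem_filter.1 hF).2
    rw [← Real.exp_log (pow_pos hx0 _), Real.exp_le_exp, Real.log_pow]
    exact mul_le_mul_of_nonpos_right hF (Real.log_nonpos hx0.le hx1)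
  have h3 : ((E.powerset.filter fun F => (F.card : ℝ) ≤ m).card : ℝ) * Real.exp (m * Real.log x)
      ≤ (1 + x) ^ E.card := by
    rw [← h1, ← nsmul_eq_mul]
    refine (Finset.card_nsmul_le_sum _ _ _ h2).trans ?_
    exact Finset.sum_le_sum_of_subset_of_nonneg (Finset.filter_subset _ _)
      fun F _ _ => by positivity
  have h4 : (1 + x) ^ E.card ≤ Real.exp (x * E.card) := by
    rw [mul_comm, Real.exp_nat_mul]
    gcongr
    linarith [Real.add_one_le_exp x]
  rw [Real.exp_sub, le_div_iff₀ (Real.exp_pos _)]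
  exact h3.trans h4

end ProductExpectation

section LocalTree

lemma path_eq_of_lt_girth {G : SimpleGraph V} {u v : V} {w w' : G.Walk u v} (hw : w.IsPath)
    (hw' : w'.IsPath) (h : w.length + w'.length < G.girth) : w = w' := by
  set H : SimpleGraph V := SimpleGraph.fromEdgeSet {e | e ∈ w.edges ∨ e ∈ w'.edges} with hH
  have mem : ∀ e, (e ∈ w.edges ∨ e ∈ w'.edges) → e ∈ H.edgeSet := by
    intro e he
    rw [hH, SimpleGraph.edgeSet_fromEdgeSet]
    refine ⟨he, fun hd => ?_⟩
    rcases he with he | he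
    · exact G.not_isDiag_of_mem_edgeSet (w.edges_subset_edgeSet he) hd
    · exact G.not_isDiag_of_mem_edgeSet (w'.edges_subset_edgeSet he) hd
  have hHG : ∀ e ∈ H.edgeSet, e ∈ w.edges ∨ e ∈ w'.edges := by
    intro e he
    rw [hH, SimpleGraph.edgeSet_fromEdgeSet] at he
    exact he.1
  by_cases hac : H.IsAcyclic
  · have h1 := hw.transfer (H := H) fun e he => mem e (Or.inl he)
    have h2 := hw'.transfer (H := H) fun e he => mem e (Or.inr he)
    have h3 := (hac.subsingleton_path u v).elim ⟨_, h1⟩ ⟨_, h2⟩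
    have h4 := congrArg (fun x : H.Path u v => x.1.support) h3
    simp only [SimpleGraph.Walk.support_transfer] at h4
    exact SimpleGraph.Walk.ext_support h4
  · exfalso
    simp only [SimpleGraph.IsAcyclic, not_forall, not_not] at hac
    obtain ⟨a, c, hc⟩ := hac
    have hcG : ∀ e ∈ c.edges, e ∈ G.edgeSet := fun e he => by
      rcases hHG e (c.edges_subset_edgeSet he) with he | he
      · exact w.edges_subset_edgeSet he
      · exact w'.edges_subset_edgeSet he
    have h1 := SimpleGraph.girth_le_length (hc.transfer hcG)
    rw [SimpleGraph.Walk.length_transfer] at h1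
    have h2 : c.edges.toFinset ⊆ w.edges.toFinset ∪ w'.edges.toFinset := by
      intro e he
      simpa using hHG e (c.edges_subset_edgeSet (List.mem_toFinset.1 he))
    have h3 := (Finset.card_le_card h2).trans (Finset.card_union_le _ _)
    rw [List.toFinset_card_of_nodup hc.edges_nodup] at h3
    have h4 := List.toFinset_card_le w.edges
    have h5 := List.toFinset_card_le w'.edges
    simp only [SimpleGraph.Walk.length_edges] at h3 h4 h5
    omega

/-- The directed edge from `x` to `y` can be continued by `r` further edges of `H` without
backtracking. -/
def surv (H : SimpleGraph V) : ℕ → V → V → Prop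
  | 0, _, _ => True
  | r + 1, x, y => ∃ z, z ≠ x ∧ H.Adj y z ∧ surv H r y z

lemma surv_mono {H H' : SimpleGraph V} (h : H ≤ H') :
    ∀ (r : ℕ) (x y : V), surv H r x y → surv H' r x y
  | 0, _, _, _ => trivial
  | r + 1, _, y, ⟨z, hz, hyz, hs⟩ => ⟨z, hz, h hyz, surv_mono h r y z hs⟩

lemma surv_of_succ {H : SimpleGraph V} :
    ∀ (r : ℕ) (x y : V), surv H (r + 1) x y → surv H r x y
  | 0, _, _, _ => trivial
  | r + 1, _, y, ⟨z, hz, hyz, hs⟩ => ⟨z, hz, hyz, surv_of_succ r y z hs⟩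

lemma surv_of_le {H : SimpleGraph V} {r j : ℕ} (h : j ≤ r) {x y : V} (hs : surv H r x y) :
    surv H j x y := by
  induction h with
  | refl => exact hs
  | step _ ih => exact ih (surv_of_succ _ _ _ hs)

/-- The vertices reachable from `y` by a path of length at most `r` avoiding `x`. -/
def branch (G : SimpleGraph V) (r : ℕ) (x y : V) : Set V :=
  {u | ∃ w : G.Walk y u, w.IsPath ∧ x ∉ w.support ∧ w.length ≤ r}

lemma notMem_support_of_lt_girth {G : SimpleGraph V} {x y z u : V} (hxy : G.Adj x y)
    (hzx : z ≠ x) (hyz : G.Adj y z) {w : G.Walk z u} (hw : w.IsPath) (hy : y ∉ w.support)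
    (h : w.length + 2 < G.girth) : x ∉ (SimpleGraph.Walk.cons hyz w).support := by
  rw [SimpleGraph.Walk.support_cons, List.mem_cons]
  rintro (rfl | hx)
  · exact hxy.ne rfl
  · have h1 : (SimpleGraph.Walk.cons hyz (w.takeUntil x hx)).IsPath :=
      (hw.takeUntil hx).cons fun h => hy (w.support_takeUntil_subset_support hx h)
    have h2 : (SimpleGraph.Walk.cons hxy.symm SimpleGraph.Walk.nil).IsPath := by
      simp [hxy.ne.symm]
    have h3 := w.length_takeUntil_le_length hx
    have h4 := path_eq_of_lt_girth h1 h2 (by simp; omega)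
    injection h4 with _ h5
    exact hzx h5

lemma branch_succ {G : SimpleGraph V} {r : ℕ} {x y z : V} (hxy : G.Adj x y) (hzx : z ≠ x)
    (hyz : G.Adj y z) (h : r + 2 < G.girth) : branch G r y z ⊆ branch G (r + 1) x y := by
  rintro u ⟨w, hw, hy, hl⟩
  exact ⟨.cons hyz w, hw.cons hy,
    notMem_support_of_lt_girth hxy hzx hyz hw hy (by omega), by simpa using hl⟩

lemma self_mem_branch {G : SimpleGraph V} {r : ℕ} {x y : V} (hxy : x ≠ y) :
    y ∈ branch G r x y := ⟨.nil, by simp, by simpa using hxy, by simp⟩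

lemma notMem_branch (G : SimpleGraph V) (r : ℕ) (x y : V) : x ∉ branch G r x y :=
  fun ⟨w, _, hx, _⟩ => hx w.end_mem_support

lemma branch_disjoint {G : SimpleGraph V} {r : ℕ} {y z z' : V} (hzz : z ≠ z')
    (hz : G.Adj y z) (hz' : G.Adj y z') (h : 2 * r + 2 < G.girth) {u : V}
    (hu : u ∈ branch G r y z) : u ∉ branch G r y z' := by
  rintro ⟨w', hw', hy', hl'⟩
  obtain ⟨w, hw, hy, hl⟩ := hu
  have h4 := path_eq_of_lt_girth (hw.cons (h := hz) hy) (hw'.cons (h := hz') hy')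
    (by simp; omega)
  injection h4 with _ h5
  exact hzz h5

/-- The edges inside a branch. -/
def branchEdges (G : SimpleGraph V) (r : ℕ) (x y : V) : Finset (Sym2 V) :=
  Finset.univ.filter fun e => ∀ v ∈ e, v ∈ branch G r x y

/-- The subgraph of `G` with edges in `s`. -/
def perc (G : SimpleGraph V) (s : Finset (Sym2 V)) : SimpleGraph V :=
  G ⊓ SimpleGraph.fromEdgeSet ↑s

lemma perc_adj {G : SimpleGraph V} {s : Finset (Sym2 V)} {x y : V} :
    (perc G s).Adj x y ↔ G.Adj x y ∧ s(x, y) ∈ s := by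
  simp only [perc, SimpleGraph.inf_adj, SimpleGraph.fromEdgeSet_adj, Finset.mem_coe]
  exact ⟨fun h => ⟨h.1, h.2.1⟩, fun h => ⟨h.1, h.2, h.1.ne⟩⟩

lemma perc_le (G : SimpleGraph V) (s : Finset (Sym2 V)) : perc G s ≤ G := inf_le_left

lemma perc_mono (G : SimpleGraph V) {s t : Finset (Sym2 V)} (h : s ⊆ t) :
    perc G s ≤ perc G t := fun x y hxy => by
  rw [perc_adj] at *
  exact ⟨hxy.1, h hxy.2⟩

lemma mem_edgeFinset' {G : SimpleGraph V} {x y : V} : s(x, y) ∈ edgeFinset' G ↔ G.Adj x y := by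
  simp [edgeFinset']

lemma fromEdgeSet_eq_perc {G : SimpleGraph V} {s : Finset (Sym2 V)} (hs : s ⊆ edgeFinset' G) :
    SimpleGraph.fromEdgeSet (↑s : Set (Sym2 V)) = perc G s := by
  ext x y
  rw [perc_adj, SimpleGraph.fromEdgeSet_adj, Finset.mem_coe]
  constructor
  · exact fun h => ⟨mem_edgeFinset'.1 (hs h.1), h.1⟩
  · exact fun h => ⟨h.2, h.1.ne⟩

lemma surv_perc_inter {G : SimpleGraph V} {A : Finset (Sym2 V)} (s : Finset (Sym2 V)) :
    ∀ (r : ℕ) (x y : V), G.Adj x y → r + 2 < G.girth → branchEdges G r x y ⊆ A →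
      (surv (perc G (s ∩ A)) r x y ↔ surv (perc G s) r x y)
  | 0, _, _, _, _, _ => Iff.rfl
  | r + 1, x, y, hxy, hg, hA => by
    refine exists_congr fun z => and_congr_right fun hz => ?_
    rw [perc_adj, perc_adj, Finset.mem_inter]
    have key : G.Adj y z → s(y, z) ∈ A ∧ branchEdges G r y z ⊆ A := by
      intro hyz
      have hsub := branch_succ hxy hz hyz (r := r) (by omega)
      refine ⟨hA ?_, fun e he => hA ?_⟩
      · simp only [branchEdges, Finset.mem_filter, Finset.mem_univ, true_and, Sym2.mem_iff]
        rintro v (rfl | rfl)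
        · exact self_mem_branch hxy.ne
        · exact hsub (self_mem_branch hyz.ne)
      · simp only [branchEdges, Finset.mem_filter, Finset.mem_univ, true_and] at he ⊢
        exact fun v hv => hsub (he v hv)
    constructor
    · rintro ⟨⟨hyz, hs, _⟩, h⟩
      exact ⟨⟨hyz, hs⟩, (surv_perc_inter s r y z hyz (by omega) (key hyz).2).1 h⟩
    · rintro ⟨⟨hyz, hs⟩, h⟩
      exact ⟨⟨hyz, hs, (key hyz).1⟩,
        (surv_perc_inter s r y z hyz (by omega) (key hyz).2).2 h⟩

lemma onlyOn_surv {G : SimpleGraph V} {r : ℕ} {x y : V} (hxy : G.Adj x y)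
    (hg : r + 2 < G.girth) :
    OnlyOn (branchEdges G r x y)
      (fun s => if surv (perc G s) r x y then (1 : ℝ) else 0) := by
  intro s
  simp only [surv_perc_inter s r x y hxy hg subset_rfl]

/-- Indicator that the edge from `y` to `z` is open and survives to depth `r`. -/
def openSurv (G : SimpleGraph V) (r : ℕ) (y z : V) (s : Finset (Sym2 V)) : ℝ :=
  (if s(y, z) ∈ s then (1 : ℝ) else 0) * (if surv (perc G s) r y z then (1 : ℝ) else 0)

lemma openSurv_eq {G : SimpleGraph V} {r : ℕ} {y z : V} (h : G.Adj y z) (s : Finset (Sym2 V)) :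
    openSurv G r y z s
      = if (perc G s).Adj y z ∧ surv (perc G s) r y z then (1 : ℝ) else 0 := by
  simp only [openSurv, perc_adj, h, true_and, ite_and]
  split_ifs <;> simp

lemma notMem_branchEdges (G : SimpleGraph V) (r : ℕ) (y z : V) :
    s(y, z) ∉ branchEdges G r y z := by
  simp only [branchEdges, Finset.mem_filter, Finset.mem_univ, true_and, not_forall]
  exact ⟨y, by simp, notMem_branch G r y z⟩

lemma onlyOn_openSurv {G : SimpleGraph V} {r : ℕ} {y z : V} (hyz : G.Adj y z)
    (hg : r + 2 < G.girth) :
    OnlyOn ({s(y, z)} ∪ branchEdges G r y z) (openSurv G r y z) :=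
  (onlyOn_mem _).mul (onlyOn_surv hyz hg)

lemma openSurv_disjoint {G : SimpleGraph V} {r : ℕ} {y z z' : V} (hz : G.Adj y z)
    (hz' : G.Adj y z') (hzz : z ≠ z') (hg : 2 * r + 2 < G.girth) :
    Disjoint ({s(y, z)} ∪ branchEdges G r y z) ({s(y, z')} ∪ branchEdges G r y z') := by
  have key : ∀ z, G.Adj y z → ∀ e ∈ {s(y, z)} ∪ branchEdges G r y z,
      (∃ v ∈ e, v ∈ branch G r y z) ∧ ∀ v ∈ e, v = y ∨ v ∈ branch G r y z := by
    intro z hz e he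
    rcases Finset.mem_union.1 he with he | he
    · rw [Finset.mem_singleton.1 he]
      refine ⟨⟨z, by simp, self_mem_branch hz.ne⟩, ?_⟩
      intro v hv
      rcases Sym2.mem_iff.1 hv with rfl | rfl
      · exact Or.inl rfl
      · exact Or.inr (self_mem_branch hz.ne)
    · have he' := (Finset.mem_filter.1 he).2
      refine ⟨?_, fun v hv => Or.inr (he' v hv)⟩
      induction e with
      | _ a b => exact ⟨a, by simp, he' a (by simp)⟩
  rw [Finset.disjoint_left]
  intro e he he'
  obtain ⟨v, hv, hvb⟩ := (key z hz e he).1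
  rcases (key z' hz' e he').2 v hv with rfl | h
  · exact notMem_branch _ _ _ _ hvb
  · exact branch_disjoint hzz hz hz' hg hvb h

/-- The probability that a branch dies before depth `r`. -/
def dieProb (d : ℕ) (p : ℝ) : ℕ → ℝ
  | 0 => 0
  | r + 1 => (1 - p + p * dieProb d p r) ^ (d - 1)

/-- The neighbours of `v` as a finset. -/
def nbrs (G : SimpleGraph V) (v : V) : Finset V := Finset.univ.filter fun y => G.Adj v y

lemma mem_nbrs {G : SimpleGraph V} {v y : V} : y ∈ nbrs G v ↔ G.Adj v y := by simp [nbrs]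

lemma card_nbrs (G : SimpleGraph V) (v : V) : (nbrs G v).card = (G.neighborSet v).ncard := by
  rw [← Set.ncard_coe_finset]
  congr 1
  ext y
  simp [nbrs]

lemma bexp_openSurv {G : SimpleGraph V} {p : ℝ} {r : ℕ} {y z : V} (hyz : G.Adj y z)
    (hg : r + 2 < G.girth) :
    bexp p (edgeFinset' G) (openSurv G r y z)
      = p * bexp p (edgeFinset' G) (fun s => if surv (perc G s) r y z then (1 : ℝ) else 0) := by
  have h := bexp_mul_of_disjoint p (edgeFinset' G)
    (Finset.disjoint_singleton_left.2 (notMem_branchEdges G r y z))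
    (onlyOn_mem s(y, z)) (onlyOn_surv hyz hg)
  rw [bexp_mem p (mem_edgeFinset'.2 hyz)] at h
  exact h

lemma bexp_surv {G : SimpleGraph V} {d : ℕ} (hG : ∀ v, (nbrs G v).card = d) (p : ℝ) :
    ∀ (r : ℕ) (x y : V), G.Adj x y → 2 * r + 2 < G.girth →
      bexp p (edgeFinset' G) (fun s => if surv (perc G s) r x y then (1 : ℝ) else 0)
        = 1 - dieProb d p r
  | 0, _, _, _, _ => by simp [surv, bexp_const, dieProb]
  | r + 1, x, y, hxy, hg => by
    have h1 : ∀ s, (if surv (perc G s) (r + 1) x y then (1 : ℝ) else 0)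
        = 1 + (-1) * ∏ z ∈ (nbrs G y).erase x, (1 + (-1) * openSurv G r y z s) := by
      intro s
      by_cases h : surv (perc G s) (r + 1) x y
      · obtain ⟨z, hz, hyz, hs⟩ := h
        rw [if_pos ⟨z, hz, hyz, hs⟩]
        have hyz' := perc_le G s hyz
        rw [Finset.prod_eq_zero (Finset.mem_erase.2 ⟨hz, mem_nbrs.2 hyz'⟩)]
        · simp
        · rw [openSurv_eq hyz', if_pos ⟨hyz, hs⟩]; norm_num
      · rw [if_neg h, Finset.prod_eq_one]
        · norm_num
        · intro z hz
          obtain ⟨hzx, hz⟩ := Finset.mem_erase.1 hz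
          rw [openSurv_eq (mem_nbrs.1 hz), if_neg fun h' => h ⟨z, hzx, h'⟩]
          norm_num
    simp only [h1]
    rw [bexp_add, bexp_const, bexp_const_mul, bexp_prod_of_disjoint p _ _
      (A := fun z => {s(y, z)} ∪ branchEdges G r y z)]
    · have h2 : ∀ z ∈ (nbrs G y).erase x,
          bexp p (edgeFinset' G) (fun s => 1 + (-1) * openSurv G r y z s)
            = 1 - p + p * dieProb d p r := by
        intro z hz
        have hyz := mem_nbrs.1 (Finset.mem_of_mem_erase hz)
        rw [bexp_add, bexp_const, bexp_const_mul, bexp_openSurv hyz (by omega),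
          bexp_surv hG p r y z hyz (by omega)]
        ring
      rw [Finset.prod_congr rfl h2, Finset.prod_const,
        Finset.card_erase_of_mem (mem_nbrs.2 hxy.symm), hG, dieProb]
      ring
    · intro z hz s
      have hyz := mem_nbrs.1 (Finset.mem_of_mem_erase hz)
      change 1 + (-1) * openSurv G r y z _ = 1 + (-1) * openSurv G r y z _
      rw [onlyOn_openSurv hyz (by omega)]
    · intro z hz z' hz' hzz
      exact openSurv_disjoint (mem_nbrs.1 (Finset.mem_of_mem_erase hz))
        (mem_nbrs.1 (Finset.mem_of_mem_erase hz')) hzz (by omega)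

/-- The neighbours of `v` in `H` whose branch survives to depth `r`. -/
def alive (H : SimpleGraph V) (r : ℕ) (v : V) : Finset V :=
  Finset.univ.filter fun y => H.Adj v y ∧ surv H r v y

lemma mem_alive {H : SimpleGraph V} {r : ℕ} {v y : V} :
    y ∈ alive H r v ↔ H.Adj v y ∧ surv H r v y := by simp [alive]

lemma alive_mono {H H' : SimpleGraph V} (h : H ≤ H') (r : ℕ) (v : V) :
    alive H r v ⊆ alive H' r v := fun y hy => by
  rw [mem_alive] at *
  exact ⟨h hy.1, surv_mono h _ _ _ hy.2⟩

lemma alive_subset_nbrs {H G : SimpleGraph V} (h : H ≤ G) (r : ℕ) (v : V) :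
    alive H r v ⊆ nbrs G v := fun _ hy => mem_nbrs.2 (h (mem_alive.1 hy).1)

lemma bexp_card_alive {G : SimpleGraph V} {d : ℕ} (hG : ∀ v, (nbrs G v).card = d) (p : ℝ)
    {r : ℕ} (hg : 2 * r + 2 < G.girth) (v : V) :
    bexp p (edgeFinset' G) (fun s => ((alive (perc G s) r v).card : ℝ))
      = d * (p * (1 - dieProb d p r)) := by
  have h1 : ∀ s, ((alive (perc G s) r v).card : ℝ) = ∑ z ∈ nbrs G v, openSurv G r v z s := by
    intro s
    rw [Finset.sum_congr rfl fun z hz => openSurv_eq (mem_nbrs.1 hz) s, Finset.sum_boole]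
    congr 2
    ext y
    simp only [mem_alive, Finset.mem_filter, mem_nbrs]
    exact ⟨fun h => ⟨perc_le G s h.1, h⟩, fun h => h.2⟩
  simp only [h1]
  rw [bexp_sum, Finset.sum_congr rfl fun z hz => ?_, Finset.sum_const, hG, nsmul_eq_mul]
  rw [bexp_openSurv (mem_nbrs.1 hz) (by omega), bexp_surv hG p r v z (mem_nbrs.1 hz) hg]

lemma bexp_card_alive_eq {G : SimpleGraph V} {d : ℕ} (hG : ∀ v, (nbrs G v).card = d) (p : ℝ)
    {r : ℕ} (hg : 2 * r + 2 < G.girth) (v : V) (k : ℕ) :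
    bexp p (edgeFinset' G) (fun s => if (alive (perc G s) r v).card = k then (1 : ℝ) else 0)
      = d.choose k * (p * (1 - dieProb d p r)) ^ k * (1 - p * (1 - dieProb d p r)) ^ (d - k) := by
  set t := p * (1 - dieProb d p r) with ht
  have h1 : ∀ s, (if (alive (perc G s) r v).card = k then (1 : ℝ) else 0)
      = ∑ A ∈ (nbrs G v).powersetCard k, ∏ z ∈ nbrs G v,
        if z ∈ A then openSurv G r v z s else 1 + (-1) * openSurv G r v z s := by
    intro s
    have h2 : ∀ A ∈ (nbrs G v).powersetCard k, (∏ z ∈ nbrs G v,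
        if z ∈ A then openSurv G r v z s else 1 + (-1) * openSurv G r v z s)
        = if alive (perc G s) r v = A then (1 : ℝ) else 0 := by
      intro A hA
      have hAn := (Finset.mem_powersetCard.1 hA).1
      have ho : ∀ z ∈ nbrs G v, openSurv G r v z s
          = if z ∈ alive (perc G s) r v then (1 : ℝ) else 0 := fun z hz => by
        rw [openSurv_eq (mem_nbrs.1 hz)]
        simp only [mem_alive]
      split_ifs with h
      · refine Finset.prod_eq_one fun z hz => ?_
        rw [ho z hz, h]
        split_ifs <;> norm_num
      · obtain ⟨z, hz, hzA⟩ : ∃ z ∈ nbrs G v, ¬ (z ∈ alive (perc G s) r v ↔ z ∈ A) := by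
          by_contra! hcon
          refine h (Finset.ext fun z => ⟨fun hz => ?_, fun hz => ?_⟩)
          · exact (hcon z (alive_subset_nbrs (perc_le G s) r v hz)).1 hz
          · exact (hcon z (hAn hz)).2 hz
        refine Finset.prod_eq_zero hz ?_
        rw [ho z hz]
        by_cases hzA' : z ∈ A <;> simp_all
    rw [Finset.sum_congr rfl h2, Finset.sum_ite_eq]
    congr 1
    rw [Finset.mem_powersetCard, eq_iff_iff]
    exact ⟨fun h => ⟨alive_subset_nbrs (perc_le G s) r v, h⟩, fun h => h.2⟩
  simp only [h1]
  rw [bexp_sum]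
  have hE : ∀ z ∈ nbrs G v, bexp p (edgeFinset' G) (openSurv G r v z) = t := fun z hz => by
    rw [bexp_openSurv (mem_nbrs.1 hz) (by omega), bexp_surv hG p r v z (mem_nbrs.1 hz) hg]
  have h3 : ∀ A ∈ (nbrs G v).powersetCard k, bexp p (edgeFinset' G) (fun s => ∏ z ∈ nbrs G v,
        if z ∈ A then openSurv G r v z s else 1 + (-1) * openSurv G r v z s)
        = t ^ k * (1 - t) ^ (d - k) := by
    intro A hA
    obtain ⟨hAn, hAc⟩ := Finset.mem_powersetCard.1 hA
    rw [bexp_prod_of_disjoint p _ _ (A := fun z => {s(v, z)} ∪ branchEdges G r v z)]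
    · have h4 : ∀ z ∈ nbrs G v, bexp p (edgeFinset' G)
          (fun s => if z ∈ A then openSurv G r v z s else 1 + (-1) * openSurv G r v z s)
          = if z ∈ A then t else 1 - t := by
        intro z hz
        by_cases hzA : z ∈ A
        · simp only [hzA, if_true]
          exact hE z hz
        · simp only [hzA, if_false]
          rw [bexp_add, bexp_const, bexp_const_mul, hE z hz]
          ring
      rw [Finset.prod_congr rfl h4, Finset.prod_ite, Finset.prod_const, Finset.prod_const,
        Finset.filter_mem_eq_inter, Finset.inter_eq_right.2 hAn, hAc,
        Finset.filter_notMem_eq_sdiff, Finset.card_sdiff_of_subset hAn, hG, hAc]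
    · intro z hz s
      have := onlyOn_openSurv (mem_nbrs.1 hz) (r := r) (by omega) s
      simp only [this]
    · intro z hz z' hz' hzz
      exact openSurv_disjoint (mem_nbrs.1 hz) (mem_nbrs.1 hz') hzz (by omega)
  rw [Finset.sum_congr rfl h3, Finset.sum_const, Finset.card_powersetCard, hG, nsmul_eq_mul]
  ring

end LocalTree

section Locality

/-- The ball of radius `r` around `v` in `G`. -/
def near (G : SimpleGraph V) (r : ℕ) (v : V) : Finset V :=
  Finset.univ.filter fun a => ∃ w : G.Walk v a, w.length ≤ r

lemma mem_near {G : SimpleGraph V} {r : ℕ} {v a : V} :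
    a ∈ near G r v ↔ ∃ w : G.Walk v a, w.length ≤ r := by simp [near]

lemma near_comm {G : SimpleGraph V} {r : ℕ} {v a : V} (h : a ∈ near G r v) :
    v ∈ near G r a := by
  rw [mem_near] at *
  obtain ⟨w, hw⟩ := h
  exact ⟨w.reverse, by simpa using hw⟩

lemma card_near_le {G : SimpleGraph V} {d : ℕ} (hG : ∀ v, (nbrs G v).card ≤ d) (r : ℕ) (v : V) :
    (near G r v).card ≤ (d + 1) ^ r := by
  induction r generalizing v with
  | zero =>
    rw [pow_zero, Finset.card_le_one]
    have : ∀ a ∈ near G 0 v, v = a := by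
      intro a ha
      obtain ⟨w, hw⟩ := mem_near.1 ha
      exact SimpleGraph.Walk.eq_of_length_eq_zero (Nat.le_zero.1 hw)
    intro a ha b hb
    rw [← this a ha, ← this b hb]
  | succ r ih =>
    have h : near G (r + 1) v ⊆ insert v ((nbrs G v).biUnion (near G r)) := by
      intro a ha
      obtain ⟨w, hw⟩ := mem_near.1 ha
      cases w with
      | nil => exact Finset.mem_insert_self _ _
      | cons hz w =>
        refine Finset.mem_insert_of_mem (Finset.mem_biUnion.2 ⟨_, mem_nbrs.2 hz, ?_⟩)
        exact mem_near.2 ⟨w, by simpa using hw⟩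
    calc (near G (r + 1) v).card ≤ _ := Finset.card_le_card h
      _ ≤ ((nbrs G v).biUnion (near G r)).card + 1 := Finset.card_insert_le _ _
      _ ≤ (nbrs G v).card * (d + 1) ^ r + 1 := by
        gcongr
        exact Finset.card_biUnion_le_card_mul _ _ _ fun z _ => ih z
      _ ≤ d * (d + 1) ^ r + (d + 1) ^ r := by
        gcongr
        · exact hG v
        · exact Nat.one_le_pow _ _ (Nat.succ_pos d)
      _ = (d + 1) ^ (r + 1) := by ring

/-- The vertices within distance `r` of an endpoint of an edge in `F`. -/
def affected (G : SimpleGraph V) (r : ℕ) (F : Finset (Sym2 V)) : Finset V :=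
  F.biUnion fun f => f.toFinset.biUnion (near G r)

lemma card_affected_le {G : SimpleGraph V} {d : ℕ} (hG : ∀ v, (nbrs G v).card ≤ d) (r : ℕ)
    (F : Finset (Sym2 V)) : (affected G r F).card ≤ F.card * (2 * (d + 1) ^ r) := by
  refine Finset.card_biUnion_le_card_mul _ _ _ fun f _ => ?_
  refine (Finset.card_biUnion_le_card_mul _ _ _ fun a _ => card_near_le hG r a).trans ?_
  gcongr
  rw [Sym2.card_toFinset]
  split_ifs <;> norm_num

lemma mem_near_of_surv_change {G H H' : SimpleGraph V} (hHG : H ≤ G) {F : Finset (Sym2 V)}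
    (hF : ∀ u v, H.Adj u v → s(u, v) ∉ F → H'.Adj u v) :
    ∀ (r : ℕ) (x y : V), surv H r x y → ¬ surv H' r x y →
      ∃ f ∈ F, ∃ a ∈ f, a ∈ near G r y
  | 0, _, _, _, h => (h trivial).elim
  | r + 1, x, y, ⟨z, hz, hyz, hs⟩, h => by
    by_cases hf : s(y, z) ∈ F
    · exact ⟨_, hf, y, by simp, mem_near.2 ⟨.nil, by simp⟩⟩
    · obtain ⟨f, hfF, a, ha, hn⟩ := mem_near_of_surv_change hHG hF r y z hs
        fun h' => h ⟨z, hz, hF _ _ hyz hf, h'⟩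
      obtain ⟨w, hw⟩ := mem_near.1 hn
      exact ⟨f, hfF, a, ha, mem_near.2 ⟨.cons (hHG hyz) w, by simpa using hw⟩⟩

lemma alive_subset_of_notMem_affected {G H H' : SimpleGraph V} (hHG : H ≤ G)
    {F : Finset (Sym2 V)} (hF : ∀ u v, H.Adj u v → s(u, v) ∉ F → H'.Adj u v) {r : ℕ} {v : V}
    (hv : v ∉ affected G (r + 1) F) : alive H r v ⊆ alive H' r v := by
  intro y hy
  rw [mem_alive] at *
  have key : ∀ f ∈ F, ∀ a ∈ f, a ∉ near G (r + 1) v := fun f hf a ha hn => hv <|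
    Finset.mem_biUnion.2 ⟨f, hf, Finset.mem_biUnion.2 ⟨a, Sym2.mem_toFinset.2 ha, near_comm hn⟩⟩
  by_cases hf : s(v, y) ∈ F
  · exact (key _ hf v (by simp) (mem_near.2 ⟨.nil, by simp⟩)).elim
  · refine ⟨hF _ _ hy.1 hf, ?_⟩
    by_contra hs
    obtain ⟨f, hfF, a, ha, hn⟩ := mem_near_of_surv_change hHG hF r v y hy.2 hs
    obtain ⟨w, hw⟩ := mem_near.1 hn
    exact key f hfF a ha (mem_near.2 ⟨.cons (hHG hy.1) w, by simpa using hw⟩)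

/-- The sum over all vertices of a function of the number of surviving branches. -/
def aliveSum (G : SimpleGraph V) (r : ℕ) (φ : ℕ → ℝ) (s : Finset (Sym2 V)) : ℝ :=
  ∑ v : V, φ (alive (perc G s) r v).card

lemma abs_aliveSum_insert_sub_le {G : SimpleGraph V} {d : ℕ} (hG : ∀ v, (nbrs G v).card ≤ d)
    (r : ℕ) {φ : ℕ → ℝ} {D : ℝ} (hφ : ∀ k ≤ d, 0 ≤ φ k ∧ φ k ≤ D) (e : Sym2 V)
    (s : Finset (Sym2 V)) :
    |aliveSum G r φ (insert e s) - aliveSum G r φ s| ≤ D * (2 * (d + 1) ^ (r + 1)) := by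
  have hD : 0 ≤ D := (hφ 0 (Nat.zero_le d)).1.trans (hφ 0 (Nat.zero_le d)).2
  have hle : ∀ s v, (alive (perc G s) r v).card ≤ d := fun s v =>
    (Finset.card_le_card (alive_subset_nbrs (perc_le G s) r v)).trans (hG v)
  rw [aliveSum, aliveSum, ← Finset.sum_sub_distrib]
  refine (Finset.abs_sum_le_sum_abs _ _).trans ?_
  have h1 : ∀ v ∈ Finset.univ, v ∉ affected G (r + 1) {e} →
      |φ (alive (perc G (insert e s)) r v).card - φ (alive (perc G s) r v).card| = 0 := by
    intro v _ hv
    rw [(alive_mono (perc_mono G (Finset.subset_insert e s)) r v).antisymm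
      (alive_subset_of_notMem_affected (perc_le G _) (fun u w h hf => ?_) hv)]
    · simp
    · rw [perc_adj] at *
      exact ⟨h.1, (Finset.mem_insert.1 h.2).resolve_left fun h => hf (by simp [h])⟩
  rw [← Finset.sum_subset (Finset.subset_univ _) h1]
  calc _ ≤ ∑ v ∈ affected G (r + 1) {e}, D := by
        refine Finset.sum_le_sum fun v _ => ?_
        have h2 := hφ _ (hle (insert e s) v)
        have h3 := hφ _ (hle s v)
        rw [abs_le]
        constructor <;> linarith
    _ ≤ D * (2 * (d + 1) ^ (r + 1)) := by
        rw [Finset.sum_const, nsmul_eq_mul, mul_comm]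
        have := card_affected_le hG (r + 1) {e}
        rw [Finset.card_singleton, one_mul] at this
        gcongr
        exact_mod_cast this

lemma card_edgeFinset'_le {G : SimpleGraph V} {d : ℕ} (hG : ∀ v, (nbrs G v).card ≤ d) :
    (edgeFinset' G).card ≤ d * Fintype.card V := by
  have h : edgeFinset' G ⊆ Finset.univ.biUnion fun v => (nbrs G v).image fun y => s(v, y) := by
    intro e he
    induction e with
    | _ a b =>
      refine Finset.mem_biUnion.2 ⟨a, Finset.mem_univ a, Finset.mem_image.2 ⟨b, ?_, rfl⟩⟩
      exact mem_nbrs.2 (mem_edgeFinset'.1 he)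
  refine (Finset.card_le_card h).trans ((Finset.card_biUnion_le_card_mul _ _ d
    fun v _ => Finset.card_image_le.trans (hG v)).trans_eq ?_)
  rw [Finset.card_univ, mul_comm]

/-- Concentration of local vertex counts. -/
lemma exists_aliveSum_concentration (d r : ℕ) {p D η : ℝ} (h0 : 0 ≤ p) (h1 : p ≤ 1) (hD : 0 ≤ D)
    (hη : 0 < η) :
    ∃ c > (0 : ℝ), ∀ (V : Type) [Fintype V] [DecidableEq V] (G : SimpleGraph V),
      (∀ v, (nbrs G v).card ≤ d) → ∀ φ : ℕ → ℝ, (∀ k ≤ d, 0 ≤ φ k ∧ φ k ≤ D) →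
        bexp p (edgeFinset' G) (fun s =>
          if η * Fintype.card V
            ≤ |aliveSum G r φ s - bexp p (edgeFinset' G) (aliveSum G r φ)| then (1 : ℝ) else 0)
          ≤ 2 * Real.exp (-c * Fintype.card V) := by
  set c₀ : ℝ := D * (2 * (d + 1) ^ (r + 1)) with hc₀
  have hc₀0 : 0 ≤ c₀ := by positivity
  set l : ℝ := min (1 / (c₀ + 1)) (η / (2 * (c₀ ^ 2 * d + 1))) with hl
  have hl0 : 0 < l := lt_min (by positivity) (by positivity)
  have hl1 : l * c₀ ≤ 1 := by
    have : l ≤ 1 / (c₀ + 1) := min_le_left _ _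
    rw [le_div_iff₀ (by positivity)] at this
    nlinarith
  have hl2 : l * (c₀ ^ 2 * d) ≤ η / 2 := by
    have : l ≤ η / (2 * (c₀ ^ 2 * d + 1)) := min_le_right _ _
    rw [le_div_iff₀ (by positivity)] at this
    nlinarith
  refine ⟨l * η / 2, by positivity, fun V _ _ G hG φ hφ => ?_⟩
  set n : ℝ := (Fintype.card V : ℝ) with hn
  have hn0 : 0 ≤ n := Nat.cast_nonneg _
  have hE : ((edgeFinset' G).card : ℝ) ≤ d * n := by
    rw [hn]; exact_mod_cast card_edgeFinset'_le hG
  have hexp : (l * c₀) ^ 2 * ((edgeFinset' G).card : ℝ) - l * (η * n) ≤ -(l * η / 2) * n := by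
    have : (l * c₀) ^ 2 * ((edgeFinset' G).card : ℝ) ≤ (l * c₀) ^ 2 * (d * n) := by gcongr
    have h3 := mul_le_mul_of_nonneg_left hl2 (mul_nonneg hl0.le hn0)
    nlinarith
  have hdiff := fun (e : Sym2 V) (_ : e ∈ edgeFinset' G) s (_ : s ⊆ edgeFinset' G) =>
    abs_aliveSum_insert_sub_le hG r hφ e s
  have hup := (bexp_tail_le (a := η * n) h0 h1 hl0.le hl1 (edgeFinset' G) (aliveSum G r φ)
    hdiff).trans (Real.exp_le_exp.2 hexp)
  have hlow := (bexp_tail_le (a := η * n) h0 h1 hl0.le hl1 (edgeFinset' G)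
    (fun s => - aliveSum G r φ s) (fun e he s hs => by
      rw [neg_sub_neg, abs_sub_comm]; exact hdiff e he s hs)).trans (Real.exp_le_exp.2 hexp)
  rw [bexp_neg] at hlow
  rw [two_mul]
  refine le_trans ?_ (add_le_add hup hlow)
  rw [← bexp_add]
  refine bexp_mono h0 h1 fun s _ => ?_
  by_cases h : η * n ≤ |aliveSum G r φ s - bexp p (edgeFinset' G) (aliveSum G r φ)|
  · rw [if_pos h]
    rcases le_abs.1 h with h | h
    · rw [if_pos (by linarith : bexp p (edgeFinset' G) (aliveSum G r φ) + η * n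
        ≤ aliveSum G r φ s)]
      split_ifs <;> norm_num
    · rw [if_pos (by linarith : -bexp p (edgeFinset' G) (aliveSum G r φ) + η * n
        ≤ -aliveSum G r φ s)]
      split_ifs <;> norm_num
  · rw [if_neg h]
    split_ifs <;> norm_num

end Locality

section Sprinkling

/-- The vertices within distance `i` of the set `A` in `G`. -/
def nearSet (G : SimpleGraph V) (A : Finset V) (i : ℕ) : Finset V :=
  Finset.univ.filter fun v => ∃ a ∈ A, ∃ w : G.Walk a v, w.length ≤ i

lemma mem_nearSet {G : SimpleGraph V} {A : Finset V} {i : ℕ} {v : V} :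
    v ∈ nearSet G A i ↔ ∃ a ∈ A, ∃ w : G.Walk a v, w.length ≤ i := by simp [nearSet]

lemma subset_nearSet (G : SimpleGraph V) (A : Finset V) (i : ℕ) : A ⊆ nearSet G A i :=
  fun a ha => mem_nearSet.2 ⟨a, ha, .nil, by simp⟩

lemma nearSet_subset_succ (G : SimpleGraph V) (A : Finset V) (i : ℕ) :
    nearSet G A i ⊆ nearSet G A (i + 1) := fun v hv => by
  obtain ⟨a, ha, w, hw⟩ := mem_nearSet.1 hv
  exact mem_nearSet.2 ⟨a, ha, w, by omega⟩

lemma mem_nearSet_succ_of_adj {G : SimpleGraph V} {A : Finset V} {i : ℕ} {u v : V}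
    (hu : u ∈ nearSet G A i) (h : G.Adj u v) : v ∈ nearSet G A (i + 1) := by
  obtain ⟨a, ha, w, hw⟩ := mem_nearSet.1 hu
  exact mem_nearSet.2 ⟨a, ha, w.concat h, by simpa using hw⟩

lemma cutCard_le {G : SimpleGraph V} {d : ℕ} (hG : ∀ v, (nbrs G v).card ≤ d)
    (D : Finset (Sym2 V)) (A : Finset V) (i : ℕ) :
    cutCard G (nearSet (perc G (edgeFinset' G \ D)) A i)
      ≤ D.card + (nearSet (perc G (edgeFinset' G \ D)) A (i + 1)
        \ nearSet (perc G (edgeFinset' G \ D)) A i).card * d := by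
  set G' := perc G (edgeFinset' G \ D) with hG'
  set S := nearSet G' A i with hS
  have h : (edgeFinset' G).filter (fun e => ∃ x ∈ S, ∃ y, y ∉ S ∧ e = s(x, y))
      ⊆ D ∪ (nearSet G' A (i + 1) \ S).biUnion fun y => (nbrs G y).image fun x => s(x, y) := by
    intro e he
    obtain ⟨heE, x, hx, y, hy, rfl⟩ := Finset.mem_filter.1 he
    rw [Finset.mem_union]
    by_cases hD : s(x, y) ∈ D
    · exact Or.inl hD
    · right
      have hxy := mem_edgeFinset'.1 heE
      have : G'.Adj x y := perc_adj.2 ⟨hxy, Finset.mem_sdiff.2 ⟨heE, hD⟩⟩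
      exact Finset.mem_biUnion.2 ⟨y, Finset.mem_sdiff.2 ⟨mem_nearSet_succ_of_adj hx this, hy⟩,
        Finset.mem_image.2 ⟨x, mem_nbrs.2 hxy.symm, rfl⟩⟩
  refine (Finset.card_le_card h).trans ((Finset.card_union_le _ _).trans ?_)
  gcongr
  exact Finset.card_biUnion_le_card_mul _ _ _ fun y _ => Finset.card_image_le.trans (hG y)

lemma half_lt_card_nearSet {G : SimpleGraph V} {d : ℕ} {b δ : ℝ}
    (hG : IsExpander G b d) (hb : 0 < b) {D : Finset (Sym2 V)}
    (hD : (D.card : ℝ) ≤ b * δ / 2 * Fintype.card V) {A : Finset V}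
    (hA : δ * Fintype.card V ≤ A.card) {i : ℕ}
    (hi : (d : ℝ) < i * (b * δ)) (hV : 0 < Fintype.card V) :
    (Fintype.card V : ℝ) / 2 < (nearSet (perc G (edgeFinset' G \ D)) A i).card := by
  have hdeg : ∀ v, (nbrs G v).card ≤ d := fun v => by rw [card_nbrs]; exact hG.1 v
  set G' := perc G (edgeFinset' G \ D) with hG'
  set n : ℝ := (Fintype.card V : ℝ) with hn
  have hn0 : 0 < n := by rw [hn]; exact_mod_cast hV
  have key : ∀ i : ℕ, n / 2 < (nearSet G' A i).card ∨
      i * (b * δ / 2 * n) ≤ d * (nearSet G' A i).card := by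
    intro i
    induction i with
    | zero => right; simp; positivity
    | succ i ih =>
      have hsub := Finset.card_le_card (nearSet_subset_succ G' A i)
      have hsub' : ((nearSet G' A i).card : ℝ) ≤ (nearSet G' A (i + 1)).card := by
        exact_mod_cast hsub
      by_cases hhalf : n / 2 < (nearSet G' A i).card
      · left; linarith
      · right
        have ih := ih.resolve_left hhalf
        have hcut := hG.2 (nearSet G' A i) (not_lt.1 hhalf)
        have hcut' := cutCard_le hdeg D A i
        have hcut'' : (cutCard G (nearSet G' A i) : ℝ)
            ≤ D.card + ((nearSet G' A (i + 1)).card - (nearSet G' A i).card) * d := by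
          rw [Finset.card_sdiff_of_subset (nearSet_subset_succ G' A i)] at hcut'
          rw [← Nat.cast_sub hsub]
          exact_mod_cast hcut'
        have hAS : ((A.card : ℕ) : ℝ) ≤ (nearSet G' A i).card := by
          exact_mod_cast Finset.card_le_card (subset_nearSet G' A i)
        have : b * (δ * n) ≤ b * (nearSet G' A i).card :=
          mul_le_mul_of_nonneg_left (hA.trans hAS) hb.le
        push_cast
        nlinarith
  rcases key i with h | h
  · exact h
  · have h1 : (d : ℝ) * (n / 2) < d * (nearSet G' A i).card := by nlinarith
    exact lt_of_mul_lt_mul_left h1 (Nat.cast_nonneg d)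

/-- Some vertex of `A` is joined to some vertex of `B` in `H`. -/
def Linked (H : SimpleGraph V) (A B : Finset V) : Prop := ∃ a ∈ A, ∃ b ∈ B, H.Reachable a b

lemma Linked.mono {H H' : SimpleGraph V} (h : H ≤ H') {A B : Finset V} (hl : Linked H A B) :
    Linked H' A B := by
  obtain ⟨a, ha, b, hb, hab⟩ := hl
  exact ⟨a, ha, b, hb, hab.mono h⟩

lemma exists_linking_set {G : SimpleGraph V} {d : ℕ} {b δ : ℝ}
    (hG : IsExpander G b d) (hb : 0 < b) {D : Finset (Sym2 V)}
    (hD : (D.card : ℝ) ≤ b * δ / 2 * Fintype.card V) {A B : Finset V}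
    (hA : δ * Fintype.card V ≤ A.card) (hB : δ * Fintype.card V ≤ B.card) {i : ℕ}
    (hi : (d : ℝ) < i * (b * δ)) (hV : 0 < Fintype.card V) :
    ∃ Q ⊆ edgeFinset' G, Disjoint Q D ∧ Q.card ≤ 2 * i ∧ Linked (perc G Q) A B := by
  have h1 := half_lt_card_nearSet hG hb hD hA hi hV
  have h2 := half_lt_card_nearSet hG hb hD hB hi hV
  set G' := perc G (edgeFinset' G \ D) with hG'
  obtain ⟨v, hv⟩ : (nearSet G' A i ∩ nearSet G' B i).Nonempty := by
    rw [← Finset.card_pos]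
    have h3 := Finset.card_union_add_card_inter (nearSet G' A i) (nearSet G' B i)
    have h4 := Finset.card_le_univ (nearSet G' A i ∪ nearSet G' B i)
    have h5 : (Fintype.card V : ℝ) < (nearSet G' A i).card + (nearSet G' B i).card := by linarith
    have h6 : Fintype.card V < (nearSet G' A i).card + (nearSet G' B i).card := by
      exact_mod_cast h5
    omega
  obtain ⟨hvA, hvB⟩ := Finset.mem_inter.1 hv
  obtain ⟨a, ha, w, hw⟩ := mem_nearSet.1 hvA
  obtain ⟨c, hc, w', hw'⟩ := mem_nearSet.1 hvB
  set W := w.append w'.reverse with hW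
  have hedge : ∀ e ∈ W.edges, e ∈ G.edgeSet ∧ e ∈ edgeFinset' G \ D := by
    intro e he
    have := W.edges_subset_edgeSet he
    induction e with
    | _ x y => exact perc_adj.1 this
  refine ⟨W.edges.toFinset, fun e he => ?_, ?_, ?_, a, ha, c, hc, ?_⟩
  · exact (Finset.mem_sdiff.1 (hedge e (List.mem_toFinset.1 he)).2).1
  · rw [Finset.disjoint_left]
    exact fun e he => (Finset.mem_sdiff.1 (hedge e (List.mem_toFinset.1 he)).2).2
  · refine (List.toFinset_card_le _).trans ?_
    rw [SimpleGraph.Walk.length_edges, hW, SimpleGraph.Walk.length_append,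
      SimpleGraph.Walk.length_reverse]
    omega
  · refine ⟨W.transfer _ fun e he => ?_⟩
    have h1 := (hedge e he).1
    have h2 := List.mem_toFinset.2 he
    induction e with
    | _ x y => exact perc_adj.2 ⟨h1, h2⟩

lemma bexp_not_linked_le {G : SimpleGraph V} {d : ℕ} {b δ p : ℝ} (h0 : 0 ≤ p) (h1 : p ≤ 1)
    (hG : IsExpander G b d) (hb : 0 < b) {A B : Finset V}
    (hA : δ * Fintype.card V ≤ A.card) (hB : δ * Fintype.card V ≤ B.card) {i : ℕ}
    (hi : (d : ℝ) < i * (b * δ)) (hV : 0 < Fintype.card V) (m : ℕ) (D : Finset (Sym2 V))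
    (hD : (D.card : ℝ) + m * (2 * i) ≤ b * δ / 2 * Fintype.card V) :
    bexp p (edgeFinset' G) (fun t => if ¬ Linked (perc G (t \ D)) A B then (1 : ℝ) else 0)
      ≤ (1 - p ^ (2 * i)) ^ m := by
  induction m generalizing D with
  | zero =>
    rw [pow_zero]
    refine le_of_le_of_eq (bexp_mono h0 h1 (g := fun _ => (1 : ℝ)) fun t _ => ?_)
      (bexp_const p (edgeFinset' G) 1)
    split_ifs <;> norm_num
  | succ m ih =>
    push_cast at hD
    have hi0 : (0 : ℝ) ≤ i := Nat.cast_nonneg i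
    have hm0 : (0 : ℝ) ≤ m := Nat.cast_nonneg m
    obtain ⟨Q, hQE, hQD, hQc, hQ⟩ := exists_linking_set hG hb (D := D)
      (by nlinarith) hA hB hi hV
    have hQc' : (Q.card : ℝ) ≤ 2 * i := by exact_mod_cast hQc
    have hcard : ((D ∪ Q).card : ℝ) ≤ D.card + Q.card := by
      exact_mod_cast Finset.card_union_le D Q
    have ih := ih (D ∪ Q) (by nlinarith)
    have hpow : p ^ (2 * i) ≤ 1 := pow_le_one₀ h0 h1
    have hpow' : p ^ (2 * i) ≤ p ^ Q.card := pow_le_pow_of_le_one h0 h1 hQc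
    have hdisj : Disjoint Q (D ∪ Q)ᶜ := by
      rw [Finset.disjoint_left]
      exact fun e he => by simp [he]
    have hf : OnlyOn Q (fun t => 1 + (-1) * if Q ⊆ t then (1 : ℝ) else 0) := by
      intro t
      simp only [Finset.subset_inter_iff, subset_rfl, and_true]
    have hg : OnlyOn (D ∪ Q)ᶜ
        (fun t => if ¬ Linked (perc G (t \ (D ∪ Q))) A B then (1 : ℝ) else 0) := by
      intro t
      have : (t ∩ (D ∪ Q)ᶜ) \ (D ∪ Q) = t \ (D ∪ Q) := by
        ext e
        simp only [Finset.mem_sdiff, Finset.mem_inter, Finset.mem_compl]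
        tauto
      simp only [this]
    calc _ ≤ bexp p (edgeFinset' G) (fun t => (1 + (-1) * if Q ⊆ t then (1 : ℝ) else 0)
          * if ¬ Linked (perc G (t \ (D ∪ Q))) A B then (1 : ℝ) else 0) := by
          refine bexp_mono h0 h1 fun t _ => ?_
          by_cases hl : Linked (perc G (t \ D)) A B
          · rw [if_neg (not_not.2 hl)]
            split_ifs <;> norm_num
          · rw [if_pos hl, if_neg, if_pos]
            · norm_num
            · exact fun h => hl (h.mono (perc_mono G
                (Finset.sdiff_subset_sdiff subset_rfl Finset.subset_union_left)))
            · exact fun h => hl (hQ.mono (perc_mono G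
                (Finset.subset_sdiff.2 ⟨h, hQD⟩)))
      _ = (1 - p ^ Q.card) * bexp p (edgeFinset' G)
          (fun t => if ¬ Linked (perc G (t \ (D ∪ Q))) A B then (1 : ℝ) else 0) := by
          rw [bexp_mul_of_disjoint p (edgeFinset' G) hdisj hf hg, bexp_add, bexp_const,
            bexp_const_mul, bexp_subset p hQE]
          ring
      _ ≤ (1 - p ^ (2 * i)) * (1 - p ^ (2 * i)) ^ m := by
          refine mul_le_mul (by linarith) ih (bexp_nonneg h0 h1 fun t _ => ?_) (by linarith)
          split_ifs <;> norm_num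
      _ = _ := (pow_succ' _ _).symm

/-- The vertices in components of `H` with at least `K` vertices. -/
def bigVerts (H : SimpleGraph V) (K : ℕ) : Finset V :=
  Finset.univ.filter fun v => K ≤ (compVerts H (H.connectedComponentMk v)).card

/-- The components of `H` with at least `K` vertices. -/
def bigComps (H : SimpleGraph V) (K : ℕ) : Finset H.ConnectedComponent :=
  (Finset.univ.image H.connectedComponentMk).filter fun c => K ≤ (compVerts H c).card

lemma card_bigComps_mul_le (H : SimpleGraph V) (K : ℕ) :
    (bigComps H K).card * K ≤ Fintype.card V := by
  calc _ = ∑ c ∈ bigComps H K, K := by rw [Finset.sum_const, smul_eq_mul]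
    _ ≤ ∑ c ∈ bigComps H K, (compVerts H c).card :=
        Finset.sum_le_sum fun c hc => (Finset.mem_filter.1 hc).2
    _ ≤ ∑ c ∈ Finset.univ.image H.connectedComponentMk, (compVerts H c).card :=
        Finset.sum_le_sum_of_subset (Finset.filter_subset _ _)
    _ = Fintype.card V := (Finset.card_eq_sum_card_fiberwise fun v _ =>
        Finset.mem_coe.2 (Finset.mem_image_of_mem _ (Finset.mem_univ v))).symm

/-- `Z` is a union of components of `H`. -/
def IsClosedIn (H : SimpleGraph V) (Z : Finset V) : Prop := ∀ u v, u ∈ Z → H.Adj u v → v ∈ Z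

lemma IsClosedIn.mem_of_reachable {H : SimpleGraph V} {Z : Finset V} (hZ : IsClosedIn H Z)
    {u v : V} (hu : u ∈ Z) (h : H.Reachable u v) : v ∈ Z := by
  obtain ⟨w⟩ := h
  induction w with
  | nil => exact hu
  | cons h _ ih => exact ih (hZ _ _ hu h)

lemma IsClosedIn.not_linked {H : SimpleGraph V} {Z A B : Finset V} (hZ : IsClosedIn H Z)
    (hA : A ⊆ Z) (hB : Disjoint B Z) : ¬ Linked H A B := by
  rintro ⟨a, ha, b, hb, hab⟩
  exact Finset.disjoint_left.1 hB hb (hZ.mem_of_reachable (hA ha) hab)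

/-- The unions of components of `H` that have at least `K` vertices. -/
def bigUnions (H : SimpleGraph V) (K : ℕ) : Finset (Finset V) :=
  (bigVerts H K).powerset.filter (IsClosedIn H)

lemma card_bigUnions_le (H : SimpleGraph V) (K : ℕ) :
    (bigUnions H K).card ≤ 2 ^ (bigComps H K).card := by
  rw [← Finset.card_powerset]
  refine Finset.card_le_card_of_injOn (fun A => A.image H.connectedComponentMk) ?_ ?_
  · intro A hA
    obtain ⟨hA, -⟩ := Finset.mem_filter.1 (Finset.mem_coe.1 hA)
    rw [Finset.mem_coe, Finset.mem_powerset]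
    intro c hc
    obtain ⟨v, hv, rfl⟩ := Finset.mem_image.1 hc
    exact Finset.mem_filter.2 ⟨Finset.mem_image_of_mem _ (Finset.mem_univ v),
      (Finset.mem_filter.1 (Finset.mem_powerset.1 hA hv)).2⟩
  · have key : ∀ A ∈ bigUnions H K, ∀ B ∈ bigUnions H K,
        A.image H.connectedComponentMk = B.image H.connectedComponentMk → A ⊆ B := by
      intro A _ B hB h v hv
      have : H.connectedComponentMk v ∈ B.image H.connectedComponentMk :=
        h ▸ Finset.mem_image_of_mem _ hv
      obtain ⟨u, hu, huv⟩ := Finset.mem_image.1 this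
      exact (Finset.mem_filter.1 hB).2.mem_of_reachable hu
        (SimpleGraph.ConnectedComponent.exact huv)
    exact fun A hA B hB h => (key A hA B hB h).antisymm (key B hB A hA h.symm)

/-- After deleting few edges, two unions of large components of the first percolation are
not joined by the second percolation. -/
def BadSplit (G : SimpleGraph V) (K : ℕ) (τ δ : ℝ) (s t : Finset (Sym2 V)) : Prop :=
  ∃ F ⊆ edgeFinset' G, (F.card : ℝ) ≤ τ * Fintype.card V ∧
    ∃ A ∈ bigUnions (perc G (s \ F)) K, δ * Fintype.card V ≤ A.card ∧
      δ * Fintype.card V ≤ (bigVerts (perc G (s \ F)) K \ A).card ∧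
      ¬ Linked (perc G (t \ F)) A (bigVerts (perc G (s \ F)) K \ A)

set_option maxHeartbeats 1000000 in
lemma exists_badSplit_bound (d : ℕ) {b δ p : ℝ} (hb : 0 < b) (hδ : 0 < δ) (h0 : 0 < p)
    (h1 : p ≤ 1) :
    ∃ c > (0 : ℝ), ∃ τ₀ > (0 : ℝ), ∃ K : ℕ, ∀ τ ≤ τ₀,
      ∀ (V : Type) [Fintype V] [DecidableEq V] (G : SimpleGraph V), IsExpander G b d →
        0 < Fintype.card V → ∀ s,
          bexp p (edgeFinset' G) (fun t => if BadSplit G K τ δ s t then (1 : ℝ) else 0)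
            ≤ 3 * Real.exp (-c * Fintype.card V) := by
  obtain ⟨i, hi⟩ : ∃ i : ℕ, (d : ℝ) / (b * δ) < i := exists_nat_gt _
  have hi0 : (0 : ℝ) < i := lt_of_le_of_lt (by positivity) hi
  rw [div_lt_iff₀ (by positivity)] at hi
  set κ : ℝ := b * δ / 2 with hκ
  have hκ0 : 0 < κ := by positivity
  set π₀ : ℝ := p ^ (2 * i) with hπ
  have hπ0 : 0 < π₀ := by positivity
  have hπ1 : π₀ ≤ 1 := pow_le_one₀ h0.le h1
  set c₁ : ℝ := π₀ * (κ / (4 * i)) with hc₁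
  have hc₁0 : 0 < c₁ := by positivity
  set x : ℝ := min 1 (c₁ / (8 * (d + 1))) with hx
  have hx0 : 0 < x := lt_min one_pos (by positivity)
  have hx1 : x ≤ 1 := min_le_left _ _
  have hxd : x * d ≤ c₁ / 8 := by
    have : x ≤ c₁ / (8 * (d + 1)) := min_le_right _ _
    rw [le_div_iff₀ (by positivity)] at this
    nlinarith
  have hlog : Real.log x ≤ 0 := Real.log_nonpos hx0.le hx1
  set τ₀ : ℝ := min (κ / 2) (c₁ / (8 * (1 - Real.log x))) with hτ₀
  have hτ₀0 : 0 < τ₀ := by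
    refine lt_min (by positivity) (div_pos hc₁0 (by linarith))
  have hτlog : -τ₀ * Real.log x ≤ c₁ / 8 := by
    have : τ₀ ≤ c₁ / (8 * (1 - Real.log x)) := min_le_right _ _
    rw [le_div_iff₀ (by linarith)] at this
    nlinarith
  obtain ⟨K, hK⟩ : ∃ K : ℕ, 8 / c₁ < K := exists_nat_gt _
  have hK0 : (0 : ℝ) < K := lt_of_le_of_lt (by positivity) hK
  rw [div_lt_iff₀ hc₁0] at hK
  refine ⟨c₁ / 2, by positivity, τ₀, hτ₀0, K, fun τ hτ V _ _ G hG hV s => ?_⟩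
  have hdeg : ∀ v, (nbrs G v).card ≤ d := fun v => by rw [card_nbrs]; exact hG.1 v
  set n : ℝ := (Fintype.card V : ℝ) with hn
  have hn0 : 0 < n := by rw [hn]; exact_mod_cast hV
  set E := edgeFinset' G with hE
  set FF := E.powerset.filter fun F => (F.card : ℝ) ≤ τ * n with hFF
  set AA : Finset (Sym2 V) → Finset (Finset V) := fun F =>
    (bigUnions (perc G (s \ F)) K).filter fun A => δ * n ≤ A.card ∧
      δ * n ≤ (bigVerts (perc G (s \ F)) K \ A).card with hAA
  set m : ℕ := ⌊κ * n / (4 * i)⌋₊ with hm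
  have hm1 : (m : ℝ) * (2 * i) ≤ κ / 2 * n := by
    have : (m : ℝ) ≤ κ * n / (4 * i) := Nat.floor_le (by positivity)
    rw [le_div_iff₀ (by positivity)] at this
    linarith
  have hm2 : κ * n / (4 * i) < m + 1 := Nat.lt_floor_add_one _
  have hone : ∀ F ∈ FF, ∀ A ∈ AA F, bexp p E (fun t =>
      if ¬ Linked (perc G (t \ F)) A (bigVerts (perc G (s \ F)) K \ A) then (1 : ℝ) else 0)
        ≤ Real.exp (1 - c₁ * n) := by
    intro F hF A hA
    have hA := (Finset.mem_filter.1 hA).2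
    have hF := (Finset.mem_filter.1 hF).2
    have hFκ : (F.card : ℝ) ≤ κ / 2 * n := hF.trans
      (mul_le_mul_of_nonneg_right (hτ.trans (min_le_left _ _)) hn0.le)
    refine (bexp_not_linked_le h0.le h1 hG hb hA.1 hA.2 hi hV m F
      (by rw [← hκ, ← hn]; linarith)).trans ?_
    calc (1 - π₀) ^ m ≤ Real.exp (-π₀) ^ m := by
          refine pow_le_pow_left₀ (by linarith) ?_ m
          linarith [Real.add_one_le_exp (-π₀)]
      _ = Real.exp (m * (-π₀)) := (Real.exp_nat_mul _ _).symm
      _ ≤ Real.exp (1 - c₁ * n) := by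
          rw [Real.exp_le_exp]
          have h3 : c₁ * n = π₀ * (κ * n / (4 * i)) := by rw [hc₁]; ring
          rw [h3]
          nlinarith
  have hcardA : ∀ F, ((AA F).card : ℝ) ≤ Real.exp (c₁ / 8 * n) := by
    intro F
    have h2 := card_bigComps_mul_le (perc G (s \ F)) K
    have h2' : ((bigComps (perc G (s \ F)) K).card : ℝ) * K ≤ n := by
      rw [hn]; exact_mod_cast h2
    calc ((AA F).card : ℝ) ≤ (bigUnions (perc G (s \ F)) K).card := by
          exact_mod_cast Finset.card_le_card (Finset.filter_subset _ _)
      _ ≤ 2 ^ (bigComps (perc G (s \ F)) K).card := by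
          exact_mod_cast card_bigUnions_le _ _
      _ ≤ Real.exp 1 ^ (bigComps (perc G (s \ F)) K).card := by
          gcongr
          linarith [Real.add_one_le_exp (1 : ℝ)]
      _ = Real.exp ((bigComps (perc G (s \ F)) K).card * 1) := (Real.exp_nat_mul _ _).symm
      _ ≤ Real.exp (c₁ / 8 * n) := by
          rw [Real.exp_le_exp, mul_one]
          have : ((bigComps (perc G (s \ F)) K).card : ℝ) * 8 ≤ c₁ * n := by
            have hj : (0 : ℝ) ≤ (bigComps (perc G (s \ F)) K).card := Nat.cast_nonneg _
            nlinarith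
          linarith
  have hcardF : (FF.card : ℝ) ≤ Real.exp (c₁ / 4 * n) := by
    refine (card_small_subsets_le E (τ * n) hx0 hx1).trans (Real.exp_le_exp.2 ?_)
    have hEc : (E.card : ℝ) ≤ d * n := by
      rw [hn]; exact_mod_cast card_edgeFinset'_le hdeg
    have h3 : x * E.card ≤ c₁ / 8 * n := by nlinarith
    have h4 : -(τ * Real.log x) ≤ c₁ / 8 := by nlinarith
    nlinarith
  calc _ ≤ bexp p E (fun t => ∑ F ∈ FF, ∑ A ∈ AA F,
        if ¬ Linked (perc G (t \ F)) A (bigVerts (perc G (s \ F)) K \ A)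
          then (1 : ℝ) else 0) := by
        refine bexp_mono h0.le h1 fun t _ => ?_
        have hnn : ∀ F ∈ FF, ∀ A ∈ AA F, (0 : ℝ) ≤
            if ¬ Linked (perc G (t \ F)) A (bigVerts (perc G (s \ F)) K \ A)
              then (1 : ℝ) else 0 := fun F _ A _ => by split_ifs <;> norm_num
        split_ifs with hbad
        · obtain ⟨F, hFE, hFc, A, hA, hA1, hA2, hl⟩ := hbad
          have hF : F ∈ FF := Finset.mem_filter.2 ⟨Finset.mem_powerset.2 hFE, hFc⟩
          have hA : A ∈ AA F := Finset.mem_filter.2 ⟨hA, hA1, hA2⟩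
          refine le_trans ?_ (Finset.single_le_sum
            (fun F hF => Finset.sum_nonneg (hnn F hF)) hF)
          refine le_trans ?_ (Finset.single_le_sum (hnn F hF) hA)
          rw [if_pos hl]
        · exact Finset.sum_nonneg fun F hF => Finset.sum_nonneg (hnn F hF)
    _ = ∑ F ∈ FF, ∑ A ∈ AA F, bexp p E (fun t =>
        if ¬ Linked (perc G (t \ F)) A (bigVerts (perc G (s \ F)) K \ A)
          then (1 : ℝ) else 0) := by
        rw [bexp_sum]
        exact Finset.sum_congr rfl fun F _ => bexp_sum _ _ _ _
    _ ≤ ∑ F ∈ FF, Real.exp (c₁ / 8 * n) * Real.exp (1 - c₁ * n) := by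
        refine Finset.sum_le_sum fun F hF => ?_
        refine (Finset.sum_le_card_nsmul _ _ _ (hone F hF)).trans ?_
        rw [nsmul_eq_mul]
        exact mul_le_mul_of_nonneg_right (hcardA F) (Real.exp_pos _).le
    _ ≤ Real.exp (c₁ / 4 * n) * (Real.exp (c₁ / 8 * n) * Real.exp (1 - c₁ * n)) := by
        rw [Finset.sum_const, nsmul_eq_mul]
        exact mul_le_mul_of_nonneg_right hcardF (by positivity)
    _ ≤ Real.exp 1 * Real.exp (-(c₁ / 2) * n) := by
        rw [← Real.exp_add, ← Real.exp_add, ← Real.exp_add, Real.exp_le_exp]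
        nlinarith
    _ ≤ 3 * Real.exp (-(c₁ / 2) * n) := by
        have := Real.exp_one_lt_d9
        gcongr
        linarith

end Sprinkling

section Splitting

lemma exists_isPath_of_surv {G H : SimpleGraph V} (hHG : H ≤ G) :
    ∀ (r : ℕ) (x y : V), G.Adj x y → r + 2 < G.girth → surv H r x y →
      ∃ (u : V) (w : H.Walk y u), w.IsPath ∧ w.length = r ∧ x ∉ w.support
  | 0, x, y, hxy, _, _ => ⟨y, .nil, by simp, rfl, by simpa using hxy.ne⟩
  | r + 1, x, y, hxy, hg, ⟨z, hz, hyz, hs⟩ => by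
    obtain ⟨u, w, hw, hl, hy⟩ := exists_isPath_of_surv hHG r y z (hHG hyz) (by omega) hs
    refine ⟨u, .cons hyz w, ?_, by simp [hl], ?_⟩
    · exact (SimpleGraph.Walk.cons_isPath_iff _ _).2 ⟨hw, hy⟩
    · have := notMem_support_of_lt_girth hxy hz (hHG hyz) (w := w.mapLe hHG)
        ((SimpleGraph.Walk.isPath_mapLe hHG).2 hw) (by simpa using hy) (by simp; omega)
      simpa using this

lemma surv_of_isPath {H : SimpleGraph V} :
    ∀ (r : ℕ) {x y u : V} (w : H.Walk y u), w.IsPath → x ∉ w.support → r ≤ w.length →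
      surv H r x y
  | 0, _, _, _, _, _, _, _ => trivial
  | r + 1, _, _, _, .nil, _, _, h => by simp at h
  | r + 1, x, y, _, .cons hyz w, hw, hx, h => by
    obtain ⟨hw, hy⟩ := (SimpleGraph.Walk.cons_isPath_iff _ _).1 hw
    refine ⟨_, ?_, hyz, surv_of_isPath r w hw hy (by simpa using h)⟩
    rintro rfl
    exact hx (by simp)

lemma mem_compVerts {H : SimpleGraph V} {c : H.ConnectedComponent} {v : V} :
    v ∈ compVerts H c ↔ H.connectedComponentMk v = c := by simp [compVerts]

lemma mem_compVerts_mk {H : SimpleGraph V} {u v : V} :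
    v ∈ compVerts H (H.connectedComponentMk u) ↔ H.Reachable u v := by
  rw [mem_compVerts, SimpleGraph.ConnectedComponent.eq]
  exact ⟨.symm, .symm⟩

lemma isClosedIn_compVerts (H : SimpleGraph V) (c : H.ConnectedComponent) :
    IsClosedIn H (compVerts H c) := fun u v hu h => by
  rw [mem_compVerts] at *
  rw [← hu, SimpleGraph.ConnectedComponent.eq]
  exact h.symm.reachable

lemma compVerts_subset {H : SimpleGraph V} {Z : Finset V} (hZ : IsClosedIn H Z) {v : V}
    (hv : v ∈ Z) : compVerts H (H.connectedComponentMk v) ⊆ Z := fun _ hu =>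
  hZ.mem_of_reachable hv (mem_compVerts_mk.1 hu)

lemma mem_bigVerts {H : SimpleGraph V} {K : ℕ} {v : V} :
    v ∈ bigVerts H K ↔ K ≤ (compVerts H (H.connectedComponentMk v)).card := by simp [bigVerts]

lemma isClosedIn_bigVerts (H : SimpleGraph V) (K : ℕ) : IsClosedIn H (bigVerts H K) :=
  fun u v hu h => by
    rw [mem_bigVerts] at *
    rwa [← SimpleGraph.ConnectedComponent.sound h.reachable]

lemma mem_bigVerts_of_surv {G H : SimpleGraph V} (hHG : H ≤ G) {r : ℕ} {x y : V}
    (hxy : G.Adj x y) (hg : r + 2 < G.girth) (hs : surv H r x y) : y ∈ bigVerts H (r + 1) := by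
  obtain ⟨u, w, hw, hl, -⟩ := exists_isPath_of_surv hHG r x y hxy hg hs
  rw [mem_bigVerts, ← hl, ← SimpleGraph.Walk.length_support,
    ← List.toFinset_card_of_nodup hw.support_nodup]
  refine Finset.card_le_card fun a ha => mem_compVerts_mk.2 ?_
  exact ⟨w.takeUntil a (List.mem_toFinset.1 ha)⟩

/-- The vertices with at least one branch of depth `j` in `H`. -/
def survSet (H : SimpleGraph V) (j : ℕ) : Finset V :=
  Finset.univ.filter fun v => (alive H j v).Nonempty

lemma mem_survSet {H : SimpleGraph V} {j : ℕ} {v : V} :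
    v ∈ survSet H j ↔ ∃ y, H.Adj v y ∧ surv H j v y := by
  simp [survSet, Finset.Nonempty, mem_alive]

lemma survSet_subset_bigVerts {G H : SimpleGraph V} (hHG : H ≤ G) {j : ℕ}
    (hg : j + 2 < G.girth) : survSet H j ⊆ bigVerts H (j + 1) := fun v hv => by
  obtain ⟨y, hvy, hs⟩ := mem_survSet.1 hv
  exact isClosedIn_bigVerts H _ _ _ (mem_bigVerts_of_surv hHG (hHG hvy) hg hs) hvy.symm

/-- Every union of components of `H` contains fewer than `m` vertices of `Y`, or all but
fewer than `m`. -/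
def Unsplit (H : SimpleGraph V) (Y : Finset V) (m : ℝ) : Prop :=
  ∀ Z, IsClosedIn H Z → ((Y ∩ Z).card : ℝ) < m ∨ ((Y \ Z).card : ℝ) < m

lemma unsplit_of_not_badSplit {G : SimpleGraph V} {K j : ℕ} {τ δ : ℝ}
    {s t : Finset (Sym2 V)} (hbad : ¬ BadSplit G K τ δ s t) (hK : K ≤ j + 1)
    (hg : j + 2 < G.girth) {F : Finset (Sym2 V)} (hFE : F ⊆ edgeFinset' G)
    (hF : (F.card : ℝ) ≤ τ * Fintype.card V)
    (haff : ((affected G (j + 1) F).card : ℝ) ≤ δ * Fintype.card V) :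
    Unsplit (perc G ((s ∪ t) \ F)) (survSet (perc G s) j) (2 * (δ * Fintype.card V)) := by
  intro Z hZ
  set H := perc G (s \ F)
  set Y := survSet (perc G s) j
  have hcl : ∀ {a}, a ⊆ s ∪ t → IsClosedIn (perc G (a \ F)) Z := fun ha u v hu h =>
    hZ u v hu (perc_mono G (Finset.sdiff_subset_sdiff ha subset_rfl) h)
  have hY : Y \ affected G (j + 1) F ⊆ bigVerts H K := by
    intro v hv
    obtain ⟨hv, hva⟩ := Finset.mem_sdiff.1 hv
    have hsub : alive (perc G s) j v ⊆ alive H j v :=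
      alive_subset_of_notMem_affected (perc_le G s) (fun a b hab hf => by
        rw [perc_adj] at *
        exact ⟨hab.1, Finset.mem_sdiff.2 ⟨hab.2, hf⟩⟩) hva
    have : v ∈ survSet H j :=
      Finset.mem_filter.2 ⟨Finset.mem_univ v, (Finset.mem_filter.1 hv).2.mono hsub⟩
    exact mem_bigVerts.2 (hK.trans (mem_bigVerts.1
      (survSet_subset_bigVerts (perc_le G _) hg this)))
  have hA : bigVerts H K ∩ Z ∈ bigUnions H K := by
    refine Finset.mem_filter.2 ⟨Finset.mem_powerset.2 Finset.inter_subset_left, ?_⟩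
    intro u v hu h
    rw [Finset.mem_inter] at *
    exact ⟨isClosedIn_bigVerts H K u v hu.1 h, hcl Finset.subset_union_left u v hu.2 h⟩
  have hl : ¬ Linked (perc G (t \ F)) (bigVerts H K ∩ Z) (bigVerts H K \ (bigVerts H K ∩ Z)) :=
    (hcl Finset.subset_union_right).not_linked Finset.inter_subset_right <| by
      rw [Finset.disjoint_left]
      intro a ha haZ
      simp only [Finset.mem_sdiff, Finset.mem_inter] at ha
      tauto
  have hsum : ∀ W B : Finset V, W ⊆ B ∪ affected G (j + 1) F →
      (B.card : ℝ) < δ * Fintype.card V → (W.card : ℝ) < 2 * (δ * Fintype.card V) := by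
    intro W B hW hB
    have h1 : (W.card : ℝ) ≤ B.card + (affected G (j + 1) F).card := by
      exact_mod_cast (Finset.card_le_card hW).trans (Finset.card_union_le _ _)
    linarith
  by_contra hcon
  rw [not_or] at hcon
  refine hbad ⟨F, hFE, hF, _, hA, ?_, ?_, hl⟩
  · by_contra h
    refine hcon.1 (hsum _ _ (fun v hv => ?_) (not_le.1 h))
    rw [Finset.mem_inter] at hv
    by_cases ha : v ∈ affected G (j + 1) F
    · exact Finset.mem_union_right _ ha
    · exact Finset.mem_union_left _
        (Finset.mem_inter.2 ⟨hY (Finset.mem_sdiff.2 ⟨hv.1, ha⟩), hv.2⟩)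
  · by_contra h
    refine hcon.2 (hsum _ _ (fun v hv => ?_) (not_le.1 h))
    rw [Finset.mem_sdiff] at hv
    by_cases ha : v ∈ affected G (j + 1) F
    · exact Finset.mem_union_right _ ha
    · refine Finset.mem_union_left _
        (Finset.mem_sdiff.2 ⟨hY (Finset.mem_sdiff.2 ⟨hv.1, ha⟩), fun h => hv.2 ?_⟩)
      exact (Finset.mem_inter.1 h).2

lemma Unsplit.exists_comp {H : SimpleGraph V} {Y : Finset V} {m : ℝ} (hU : Unsplit H Y m)
    (hm : 0 < m) (hY : 3 * m ≤ Y.card) :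
    ∃ c : H.ConnectedComponent, ((Y \ compVerts H c).card : ℝ) < m := by
  by_contra hcon
  push Not at hcon
  have hsmall : ∀ c : H.ConnectedComponent, ((Y ∩ compVerts H c).card : ℝ) < m := fun c =>
    (hU _ (isClosedIn_compVerts H c)).resolve_right (not_lt.2 (hcon c))
  have key : ∀ 𝒞 : Finset H.ConnectedComponent,
      ((Y ∩ 𝒞.biUnion (compVerts H)).card : ℝ) < m := by
    intro 𝒞
    induction 𝒞 using Finset.induction_on with
    | empty => simpa using hm
    | insert c 𝒞 hc ih =>
      have hcl : IsClosedIn H ((insert c 𝒞).biUnion (compVerts H)) := by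
        intro u v hu h
        obtain ⟨c', hc', hu⟩ := Finset.mem_biUnion.1 hu
        exact Finset.mem_biUnion.2 ⟨c', hc', isClosedIn_compVerts H c' u v hu h⟩
      refine (hU _ hcl).resolve_right fun h => ?_
      have h1 : (Y ∩ (insert c 𝒞).biUnion (compVerts H)).card
          ≤ (Y ∩ compVerts H c).card + (Y ∩ 𝒞.biUnion (compVerts H)).card := by
        rw [Finset.biUnion_insert, Finset.inter_union_distrib_left]
        exact Finset.card_union_le _ _
      have h2 := Finset.card_inter_add_card_sdiff Y ((insert c 𝒞).biUnion (compVerts H))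
      have h1' : ((Y ∩ (insert c 𝒞).biUnion (compVerts H)).card : ℝ)
          ≤ (Y ∩ compVerts H c).card + (Y ∩ 𝒞.biUnion (compVerts H)).card := by exact_mod_cast h1
      have h2' : ((Y ∩ (insert c 𝒞).biUnion (compVerts H)).card : ℝ)
          + (Y \ (insert c 𝒞).biUnion (compVerts H)).card = Y.card := by exact_mod_cast h2
      have := hsmall c
      linarith
  have h := key (Finset.univ.image H.connectedComponentMk)
  have hall : Y ∩ (Finset.univ.image H.connectedComponentMk).biUnion (compVerts H) = Y := by
    refine Finset.inter_eq_left.2 fun v _ => Finset.mem_biUnion.2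
      ⟨H.connectedComponentMk v, Finset.mem_image_of_mem _ (Finset.mem_univ v), ?_⟩
    exact mem_compVerts.2 rfl
  rw [hall] at h
  linarith

/-- The component of `w` after removing the edge `vw` from `H`. -/
def side (H : SimpleGraph V) (v w : V) : Finset V :=
  Finset.univ.filter fun u => (H.deleteEdges {s(v, w)}).Reachable w u

lemma mem_side {H : SimpleGraph V} {v w u : V} :
    u ∈ side H v w ↔ (H.deleteEdges {s(v, w)}).Reachable w u := by simp [side]

lemma self_mem_side (H : SimpleGraph V) (v w : V) : w ∈ side H v w := mem_side.2 .rfl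

lemma isClosedIn_side (H : SimpleGraph V) (v w : V) :
    IsClosedIn (H.deleteEdges {s(v, w)}) (side H v w) := fun u u' hu h => by
  rw [mem_side] at *
  exact hu.trans h.reachable

lemma mem_side_of_adj {H : SimpleGraph V} {v w u u' : V} (hu : u ∈ side H v w)
    (h : H.Adj u u') (hne : s(u, u') ≠ s(v, w)) : u' ∈ side H v w := by
  refine isClosedIn_side H v w u u' hu ?_
  rw [SimpleGraph.deleteEdges_adj]
  exact ⟨h, hne⟩

lemma side_subset {H : SimpleGraph V} {v w z : V} (hzv : z ≠ v) (hwz : H.Adj w z)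
    (hw : w ∉ side H w z) : side H w z ⊆ side H v w := by
  have hz : z ∈ side H v w := by
    refine mem_side_of_adj (self_mem_side H v w) hwz fun h => ?_
    rcases Sym2.eq_iff.1 h with h | h
    · exact hwz.ne h.2.symm
    · exact hzv h.2
  have hcl : IsClosedIn (H.deleteEdges {s(w, z)}) (side H w z ∩ side H v w) := by
    intro u u' hu h
    rw [Finset.mem_inter] at *
    have hu' := isClosedIn_side H w z u u' hu.1 h
    refine ⟨hu', mem_side_of_adj hu.2 (SimpleGraph.deleteEdges_le _ h) fun he => ?_⟩
    rcases Sym2.eq_iff.1 he with he | he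
    · exact hw (he.2 ▸ hu')
    · exact hw (he.1 ▸ hu.1)
  intro u hu
  exact (Finset.mem_inter.1 (hcl.mem_of_reachable
    (Finset.mem_inter.2 ⟨self_mem_side H w z, hz⟩) (mem_side.1 hu))).2

lemma side_subset_biUnion (H : SimpleGraph V) (v w : V) :
    side H v w ⊆ insert w (((nbrs H w).erase v).biUnion (side H w)) := by
  set Z := insert w (((nbrs H w).erase v).biUnion (side H w)) with hZ
  have hcl : IsClosedIn (H.deleteEdges {s(v, w)}) Z := by
    intro u u' hu h
    rw [SimpleGraph.deleteEdges_adj] at h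
    rw [hZ, Finset.mem_insert, Finset.mem_biUnion] at *
    rcases hu with rfl | ⟨z, hz, hu⟩
    · right
      refine ⟨u', Finset.mem_erase.2 ⟨?_, mem_nbrs.2 h.1⟩, self_mem_side H u u'⟩
      rintro rfl
      exact h.2 Sym2.eq_swap
    · by_cases he : s(u, u') = s(w, z)
      · rcases Sym2.eq_iff.1 he with he | he
        · exact Or.inr ⟨z, hz, he.2 ▸ self_mem_side H w z⟩
        · exact Or.inl he.2
      · exact Or.inr ⟨z, hz, mem_side_of_adj hu h.1 he⟩
  exact fun u hu => hcl.mem_of_reachable (Finset.mem_insert_self _ _) (mem_side.1 hu)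

lemma isClosedIn_side_union (H : SimpleGraph V) (v w : V) :
    IsClosedIn H (side H v w ∪ side H w v) := by
  intro u u' hu h
  rw [Finset.mem_union] at *
  by_cases he : s(u, u') = s(v, w)
  · rcases Sym2.eq_iff.1 he with he | he
    · exact Or.inl (he.2 ▸ self_mem_side H v w)
    · exact Or.inr (he.2 ▸ self_mem_side H w v)
  · rcases hu with hu | hu
    · exact Or.inl (mem_side_of_adj hu h he)
    · exact Or.inr (mem_side_of_adj hu h (by rwa [Sym2.eq_swap (a := w)]))

lemma exists_adj_not_bridge {H : SimpleGraph V} {Y : Finset V} {m : ℝ} {d : ℕ}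
    (hdeg : ∀ v, (nbrs H v).card ≤ d) (c : H.ConnectedComponent)
    (hc : ((Y \ compVerts H c).card : ℝ) < m) (hm : 1 ≤ m) (hY : 1 + (d + 3) * m ≤ Y.card)
    (hU : ∀ v w, H.Adj v w → Unsplit (H.deleteEdges {s(v, w)}) Y m) :
    ∃ v w, H.Adj v w ∧ v ∈ compVerts H c ∧ (H.deleteEdges {s(v, w)}).Reachable v w := by
  by_contra hcon
  push Not at hcon
  have hd0 : (0 : ℝ) ≤ d := Nat.cast_nonneg d
  have hbr : ∀ v w, H.Adj v w → v ∈ compVerts H c → v ∉ side H v w := fun v w h hv hs =>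
    hcon v w h hv (mem_side.1 hs).symm
  have hYc : ((Y ∩ compVerts H c).card : ℝ) + (Y \ compVerts H c).card = Y.card := by
    exact_mod_cast Finset.card_inter_add_card_sdiff Y (compVerts H c)
  have hbig : 2 * m < (Y ∩ compVerts H c).card := by nlinarith
  obtain ⟨w₀, hw₀⟩ : (Y ∩ compVerts H c).Nonempty := by
    rw [← Finset.card_pos]
    have : (0 : ℝ) < (Y ∩ compVerts H c).card := by linarith
    exact_mod_cast this
  have hw₀c := (Finset.mem_inter.1 hw₀).2
  have hceq : H.connectedComponentMk w₀ = c := mem_compVerts.1 hw₀c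
  obtain ⟨v₀, hv₀⟩ : ∃ v, H.Adj w₀ v := by
    by_contra h
    push Not at h
    have hcl : IsClosedIn H {w₀} := fun u v hu hv => by
      rw [Finset.mem_singleton.1 hu] at hv
      exact (h v hv).elim
    have := Finset.card_le_card (Finset.inter_subset_right.trans
      (hceq ▸ compVerts_subset hcl (Finset.mem_singleton_self w₀)) :
        Y ∩ compVerts H c ⊆ {w₀})
    rw [Finset.card_singleton] at this
    have : ((Y ∩ compVerts H c).card : ℝ) ≤ 1 := by exact_mod_cast this
    linarith
  have hv₀c := isClosedIn_compVerts H c _ _ hw₀c hv₀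
  set P : Finset (V × V) := Finset.univ.filter fun e =>
    H.Adj e.1 e.2 ∧ e.1 ∈ compVerts H c ∧ m ≤ ((Y ∩ side H e.1 e.2).card : ℝ) with hP
  have hne : P.Nonempty := by
    have hsub : Y ∩ compVerts H c ⊆ (Y ∩ side H v₀ w₀) ∪ (Y ∩ side H w₀ v₀) := by
      rw [← Finset.inter_union_distrib_left]
      refine Finset.inter_subset_inter_left ?_
      rw [← hceq]
      exact compVerts_subset (isClosedIn_side_union H v₀ w₀)
        (Finset.mem_union_left _ (self_mem_side H v₀ w₀))
    have h1 : ((Y ∩ compVerts H c).card : ℝ)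
        ≤ (Y ∩ side H v₀ w₀).card + (Y ∩ side H w₀ v₀).card := by
      exact_mod_cast (Finset.card_le_card hsub).trans (Finset.card_union_le _ _)
    by_cases h : m ≤ ((Y ∩ side H v₀ w₀).card : ℝ)
    · exact ⟨(v₀, w₀), Finset.mem_filter.2 ⟨Finset.mem_univ _, hv₀.symm, hv₀c, h⟩⟩
    · exact ⟨(w₀, v₀), Finset.mem_filter.2 ⟨Finset.mem_univ _, hv₀, hw₀c,
        show m ≤ ((Y ∩ side H w₀ v₀).card : ℝ) by linarith⟩⟩
  obtain ⟨⟨v, w⟩, hvw, hmin⟩ := P.exists_min_image (fun e => (side H e.1 e.2).card) hne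
  obtain ⟨-, hadj, hvc, hheavy⟩ := Finset.mem_filter.1 hvw
  simp only at hadj hvc hheavy hmin
  have hwc := isClosedIn_compVerts H c _ _ hvc hadj
  have hrest := (hU v w hadj _ (isClosedIn_side H v w)).resolve_left (not_lt.2 hheavy)
  have hlight : ∀ z ∈ (nbrs H w).erase v, ((Y ∩ side H w z).card : ℝ) ≤ m := by
    intro z hz
    obtain ⟨hzv, hz⟩ := Finset.mem_erase.1 hz
    have hwz := mem_nbrs.1 hz
    by_contra hlt
    have hw := hbr w z hwz hwc
    have h1 := hmin (w, z) (Finset.mem_filter.2 ⟨Finset.mem_univ _, hwz, hwc,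
      show m ≤ ((Y ∩ side H w z).card : ℝ) by linarith⟩)
    have h2 := Finset.card_lt_card ((Finset.ssubset_iff_of_subset (side_subset hzv hwz hw)).2
      ⟨w, self_mem_side H v w, hw⟩)
    simp only at h1
    omega
  have hcount : ((Y ∩ side H v w).card : ℝ) ≤ 1 + d * m := by
    have hsub : Y ∩ side H v w
        ⊆ insert w (((nbrs H w).erase v).biUnion fun z => Y ∩ side H w z) := by
      intro u hu
      obtain ⟨huY, hu⟩ := Finset.mem_inter.1 hu
      have := side_subset_biUnion H v w hu
      rw [Finset.mem_insert, Finset.mem_biUnion] at *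
      exact this.imp_right fun ⟨z, hz, h⟩ => ⟨z, hz, Finset.mem_inter.2 ⟨huY, h⟩⟩
    have h1 := (Finset.card_le_card hsub).trans ((Finset.card_insert_le _ _).trans
      (Nat.add_le_add_right Finset.card_biUnion_le 1))
    have h2 : ((Y ∩ side H v w).card : ℝ)
        ≤ ∑ z ∈ (nbrs H w).erase v, ((Y ∩ side H w z).card : ℝ) + 1 := by exact_mod_cast h1
    have h3 := Finset.sum_le_card_nsmul _ _ _ hlight
    rw [nsmul_eq_mul] at h3
    have h4 : (((nbrs H w).erase v).card : ℝ) ≤ d := by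
      exact_mod_cast (Finset.card_le_card (Finset.erase_subset _ _)).trans (hdeg w)
    nlinarith
  have hYs : ((Y ∩ side H v w).card : ℝ) + (Y \ side H v w).card = Y.card := by
    exact_mod_cast Finset.card_inter_add_card_sdiff Y (side H v w)
  nlinarith

end Splitting

section TwoCore

lemma twoCoreComp_le (H : SimpleGraph V) (c : H.ConnectedComponent) : twoCoreComp H c ≤ H :=
  sSup_le fun _ h => h.1

lemma le_twoCoreComp {H C : SimpleGraph V} {c : H.ConnectedComponent} (hC : C ≤ H)
    (hc : ∀ v ∈ C.support, H.connectedComponentMk v = c)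
    (hdeg : ∀ v ∈ C.support, 2 ≤ (C.neighborSet v).ncard) : C ≤ twoCoreComp H c :=
  le_sSup ⟨hC, hc, hdeg⟩

lemma mem_comp_of_mem_support {H : SimpleGraph V} {c : H.ConnectedComponent} {v : V}
    (hv : v ∈ (twoCoreComp H c).support) : H.connectedComponentMk v = c := by
  obtain ⟨u, hu⟩ := hv
  obtain ⟨C, hC, hvu⟩ := SimpleGraph.sSup_adj.1 hu
  exact hC.2.1 v ⟨u, hvu⟩

lemma two_le_ncard_of_mem_support {H : SimpleGraph V} {c : H.ConnectedComponent} {v : V}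
    (hv : v ∈ (twoCoreComp H c).support) : 2 ≤ ((twoCoreComp H c).neighborSet v).ncard := by
  obtain ⟨u, hu⟩ := hv
  obtain ⟨C, hC, hvu⟩ := SimpleGraph.sSup_adj.1 hu
  refine (hC.2.2 v ⟨u, hvu⟩).trans (Set.ncard_le_ncard (fun y hy => ?_) (Set.toFinite _))
  exact SimpleGraph.sSup_adj.2 ⟨C, hC, hy⟩

lemma exists_ne_of_two_le_ncard {C : SimpleGraph V} {v : V}
    (h : 2 ≤ (C.neighborSet v).ncard) (x : V) : ∃ z, z ≠ x ∧ C.Adj v z := by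
  obtain ⟨z, hz, hzx⟩ := Set.exists_ne_of_one_lt_ncard (s := C.neighborSet v) (by omega) x
  exact ⟨z, hzx, hz⟩

lemma two_le_ncard_of_ne {C : SimpleGraph V} {v y z : V} (hyz : y ≠ z) (hy : C.Adj v y)
    (hz : C.Adj v z) : 2 ≤ (C.neighborSet v).ncard :=
  (Set.one_lt_ncard (Set.toFinite _)).2 ⟨y, hy, z, hz, hyz⟩

lemma surv_of_twoCoreComp_adj {H : SimpleGraph V} {c : H.ConnectedComponent} :
    ∀ (r : ℕ) {x y : V}, (twoCoreComp H c).Adj x y → surv H r x y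
  | 0, _, _, _ => trivial
  | r + 1, x, y, h => by
    obtain ⟨z, hz, hyz⟩ := exists_ne_of_two_le_ncard
      (two_le_ncard_of_mem_support (c := c) ⟨x, h.symm⟩) x
    exact ⟨z, hz, twoCoreComp_le H c hyz, surv_of_twoCoreComp_adj r hyz⟩

lemma twoCoreComp_adj_of_cycle {H : SimpleGraph V} {c : H.ConnectedComponent} {u : V}
    {w : H.Walk u u} (hw : w.IsCycle) (hu : H.connectedComponentMk u = c) {x y : V}
    (hxy : s(x, y) ∈ w.edges) : (twoCoreComp H c).Adj x y := by
  have hle : w.toSubgraph.spanningCoe ≤ H := w.toSubgraph.spanningCoe_le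
  have hsup : ∀ v ∈ w.toSubgraph.spanningCoe.support, v ∈ w.support := by
    rintro v ⟨z, hz⟩
    have hz : w.toSubgraph.Adj v z := hz
    exact w.mem_verts_toSubgraph.1 (w.toSubgraph.edge_vert hz)
  refine le_twoCoreComp hle (fun v hv => ?_) (fun v hv => ?_) ?_
  · rw [← hu, SimpleGraph.ConnectedComponent.eq]
    exact ⟨(w.takeUntil v (hsup v hv)).reverse⟩
  · have := hw.ncard_neighborSet_toSubgraph_eq_two (hsup v hv)
    exact this.ge
  · rw [SimpleGraph.Subgraph.spanningCoe_adj, ← SimpleGraph.Subgraph.mem_edgeSet]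
    exact w.mem_edges_toSubgraph.2 hxy

/-- There is a non-backtracking walk in `H` from `y` to `S` that does not start by
returning to `x`. -/
inductive Leads (H : SimpleGraph V) (S : Set V) : V → V → Prop
  | base {x y : V} : y ∈ S → Leads H S x y
  | step {x y z : V} : z ≠ x → H.Adj y z → Leads H S y z → Leads H S x y

lemma twoCoreComp_adj_of_leads {H : SimpleGraph V} {c : H.ConnectedComponent} {x y : V}
    (hx : H.connectedComponentMk x = c) (hxy : H.Adj x y)
    (h : Leads H (twoCoreComp H c).support x y) (h' : Leads H (twoCoreComp H c).support y x) :
    (twoCoreComp H c).Adj x y := by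
  set S := (twoCoreComp H c).support with hS
  let E : SimpleGraph V :=
    { Adj := fun a b => H.Adj a b ∧ H.connectedComponentMk a = c ∧ Leads H S a b ∧ Leads H S b a
      symm := ⟨fun a b hab => ⟨hab.1.symm,
        by rw [← SimpleGraph.ConnectedComponent.sound hab.1.reachable]; exact hab.2.1,
        hab.2.2.2, hab.2.2.1⟩⟩
      loopless := ⟨fun a ha => ha.1.ne rfl⟩ }
  have hE : E ≤ H := fun a b hab => hab.1
  have hle : twoCoreComp H c ⊔ E ≤ twoCoreComp H c := by
    refine le_twoCoreComp (sup_le (twoCoreComp_le H c) hE) (fun v hv => ?_) fun v hv => ?_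
    · obtain ⟨u, hu | hu⟩ := hv
      · exact mem_comp_of_mem_support ⟨u, hu⟩
      · exact hu.2.1
    · by_cases hvS : v ∈ S
      · exact (two_le_ncard_of_mem_support hvS).trans
          (Set.ncard_le_ncard (fun y hy => Or.inl hy) (Set.toFinite _))
      · obtain ⟨u, hu | hu⟩ := hv
        · exact (hvS ⟨u, hu⟩).elim
        · obtain ⟨hadj, hvc, hvu, huv⟩ := id hu
          cases huv with
          | base hmem => exact (hvS hmem).elim
          | @step _ _ z hz hvz hlead =>
            have hEz : E.Adj v z := ⟨hvz, hvc, hlead, .step hz.symm hadj hvu⟩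
            exact two_le_ncard_of_ne hz (Or.inr hEz) (Or.inr hu)
  exact hle (Or.inr ⟨hxy, hx, h, h'⟩)

/-- The graph `H` with all edges meeting `S` removed. -/
def off (H : SimpleGraph V) (S : Set V) : SimpleGraph V where
  Adj a b := H.Adj a b ∧ a ∉ S ∧ b ∉ S
  symm := ⟨fun _ _ h => ⟨h.1.symm, h.2.2, h.2.1⟩⟩
  loopless := ⟨fun _ h => h.1.ne rfl⟩

lemma off_le (H : SimpleGraph V) (S : Set V) : off H S ≤ H := fun _ _ h => h.1

lemma surv_off_of_not_leads {H : SimpleGraph V} {S : Set V} :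
    ∀ (r : ℕ) {x y : V}, surv H r x y → ¬ Leads H S x y → surv (off H S) r x y
  | 0, _, _, _, _ => trivial
  | r + 1, x, y, ⟨z, hz, hyz, hs⟩, h => by
    have hyS : y ∉ S := fun hy => h (.base hy)
    have hlead : ¬ Leads H S y z := fun hl => h (.step hz hyz hl)
    exact ⟨z, hz, ⟨hyz, hyS, fun hzS => hlead (.base hzS)⟩, surv_off_of_not_leads r hs hlead⟩

lemma notMem_of_reachable_off {H : SimpleGraph V} {S : Set V} {t u : V} (ht : t ∉ S)
    (h : (off H S).Reachable t u) : u ∉ S := by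
  obtain ⟨w⟩ := h
  induction w with
  | nil => exact ht
  | cons h _ ih => exact ih h.2.2

lemma leads_of_isPath {H : SimpleGraph V} {S : Set V} {t t' u' : V}
    (w : (off H S).Walk t t') (hw : w.IsPath) (h : H.Adj t' u') (hu' : u' ∈ S) {x : V}
    (hx : x ∉ w.support) (hxu : x ≠ u') : Leads H S x t := by
  induction w generalizing x with
  | nil => exact .step hxu.symm h (.base hu')
  | @cons a b _ hab w ih =>
    obtain ⟨hw, ha⟩ := (SimpleGraph.Walk.cons_isPath_iff _ _).1 hw
    refine .step ?_ hab.1 (ih hw h ha ?_)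
    · rintro rfl
      exact hx (by simp)
    · rintro rfl
      exact hab.2.1 hu'

lemma leads_of_reachable_off {H : SimpleGraph V} {S : Set V} {t t' u u' : V} (ht : t ∉ S)
    (hu : u ∈ S) (hr : (off H S).Reachable t t') (h : H.Adj t' u') (hu' : u' ∈ S)
    (hne : t ≠ t' ∨ u ≠ u') : Leads H S u t := by
  obtain ⟨w, hw⟩ := hr.exists_isPath
  by_cases huu : u = u'
  · have htt := hne.resolve_right (not_not.2 huu)
    cases w with
    | nil => exact (htt rfl).elim
    | @cons _ b _ hab w =>
      obtain ⟨hw, ha⟩ := (SimpleGraph.Walk.cons_isPath_iff _ _).1 hw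
      refine .step ?_ hab.1 (leads_of_isPath w hw h hu' ha ?_)
      · rintro rfl
        exact hab.2.2 hu
      · rintro rfl
        exact ht hu'
  · refine leads_of_isPath w hw h hu' (fun hmem => ?_) huu
    exact notMem_of_reachable_off ht ⟨w.takeUntil u hmem⟩ hu

/-- The edges from components of `off H S` with at least `K` vertices to `S`, as pairs. -/
def trunkPairs (H : SimpleGraph V) (S : Set V) (K : ℕ) : Finset (V × V) :=
  Finset.univ.filter fun e =>
    H.Adj e.1 e.2 ∧ e.1 ∈ bigVerts (off H S) K ∧ e.1 ∉ S ∧ e.2 ∈ S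

lemma mem_trunkPairs {H : SimpleGraph V} {S : Set V} {K : ℕ} {t u : V} :
    (t, u) ∈ trunkPairs H S K ↔ H.Adj t u ∧ t ∈ bigVerts (off H S) K ∧ t ∉ S ∧ u ∈ S := by
  simp [trunkPairs]

/-- The edges joining `S` to the components of `off H S` with at least `K` vertices. -/
def trunkEdges (H : SimpleGraph V) (S : Set V) (K : ℕ) : Finset (Sym2 V) :=
  (trunkPairs H S K).image fun e => s(e.1, e.2)

lemma mem_trunkEdges_of_adj {H : SimpleGraph V} {S : Set V} {K : ℕ} {t u : V}
    (h : H.Adj t u) (ht : t ∈ bigVerts (off H S) K) (htS : t ∉ S) (hu : u ∈ S) :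
    s(t, u) ∈ trunkEdges H S K :=
  Finset.mem_image.2 ⟨(t, u), mem_trunkPairs.2 ⟨h, ht, htS, hu⟩, rfl⟩

lemma trunkEdges_subset {G H : SimpleGraph V} (hHG : H ≤ G) (S : Set V) (K : ℕ) :
    trunkEdges H S K ⊆ edgeFinset' G := fun e he => by
  obtain ⟨⟨t, u⟩, h, rfl⟩ := Finset.mem_image.1 he
  exact mem_edgeFinset'.2 (hHG (mem_trunkPairs.1 h).1)

lemma card_trunkEdges_mul_le (H : SimpleGraph V) (c : H.ConnectedComponent) (K : ℕ) :
    (trunkEdges H (twoCoreComp H c).support K).card * K ≤ Fintype.card V := by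
  set S := (twoCoreComp H c).support with hS
  refine le_trans (Nat.mul_le_mul_right K ?_) (card_bigComps_mul_le (off H S) K)
  refine Finset.card_image_le.trans
    (Finset.card_le_card_of_injOn (fun e => (off H S).connectedComponentMk e.1) ?_ ?_)
  · rintro ⟨t, u⟩ he
    have he := mem_trunkPairs.1 (Finset.mem_coe.1 he)
    exact Finset.mem_coe.2 (Finset.mem_filter.2
      ⟨Finset.mem_image_of_mem _ (Finset.mem_univ _), mem_bigVerts.1 he.2.1⟩)
  · rintro ⟨t, u⟩ he ⟨t', u'⟩ he' hcomp
    obtain ⟨h, -, ht, hu⟩ := mem_trunkPairs.1 (Finset.mem_coe.1 he)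
    obtain ⟨h', -, -, hu'⟩ := mem_trunkPairs.1 (Finset.mem_coe.1 he')
    simp only at hcomp
    by_contra hne
    have hne : t ≠ t' ∨ u ≠ u' := by
      by_contra hcon
      push Not at hcon
      exact hne (by rw [hcon.1, hcon.2])
    have hl := leads_of_reachable_off ht hu (SimpleGraph.ConnectedComponent.exact hcomp) h' hu' hne
    have := twoCoreComp_adj_of_leads (mem_comp_of_mem_support hu) h.symm hl (.base hu)
    exact ht ⟨u, this.symm⟩

end TwoCore

section CoreDegree

lemma mem_survSet_of_card_lt {G H : SimpleGraph V} {d j : ℕ} (hHG : H ≤ G)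
    (hdeg : ∀ v, (nbrs G v).card ≤ d) {v : V}
    (h : (d + 1) ^ j < (compVerts H (H.connectedComponentMk v)).card) : v ∈ survSet H j := by
  obtain ⟨u, hu, hun⟩ : ∃ u ∈ compVerts H (H.connectedComponentMk v), u ∉ near G j v := by
    by_contra hcon
    push Not at hcon
    exact absurd ((Finset.card_le_card hcon).trans (card_near_le hdeg j v)) (not_le.2 h)
  obtain ⟨w, hw⟩ := (mem_compVerts_mk.1 hu).exists_isPath
  have hl : j < w.length := by
    by_contra hl
    exact hun (mem_near.2 ⟨w.mapLe hHG, by simpa using hl⟩)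
  cases w with
  | nil => simp at hl
  | cons hvy w =>
    obtain ⟨hw, hv⟩ := (SimpleGraph.Walk.cons_isPath_iff _ _).1 hw
    rw [SimpleGraph.Walk.length_cons] at hl
    exact mem_survSet.2 ⟨_, hvy, surv_of_isPath j w hw hv (by omega)⟩

lemma exists_mem_support_of_unsplit {H H' : SimpleGraph V} (hH : H' ≤ H)
    {c₁ : H.ConnectedComponent} {c : H'.ConnectedComponent}
    (hcc : compVerts H' c ⊆ compVerts H c₁) {Y : Finset V} {m : ℝ} {d : ℕ}
    (hdeg : ∀ v, (nbrs H' v).card ≤ d)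
    (hc : ((Y \ compVerts H' c).card : ℝ) < m) (hm : 1 ≤ m) (hY : 1 + (d + 3) * m ≤ Y.card)
    (hU : ∀ v w, H'.Adj v w → Unsplit (H'.deleteEdges {s(v, w)}) Y m) :
    ∃ v ∈ compVerts H' c, v ∈ (twoCoreComp H c₁).support := by
  obtain ⟨v, w, hvw, hvc, hr⟩ := exists_adj_not_bridge hdeg c hc hm hY hU
  obtain ⟨z, p, hp, hmem⟩ :=
    SimpleGraph.adj_and_reachable_delete_edges_iff_exists_cycle.1 ⟨hvw, hr⟩
  have hz : H.connectedComponentMk z = c₁ := by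
    rw [← mem_compVerts.1 (hcc hvc), SimpleGraph.ConnectedComponent.eq]
    exact ⟨(p.takeUntil v (p.fst_mem_support_of_mem_edges hmem)).mapLe hH⟩
  refine ⟨v, hvc, w, twoCoreComp_adj_of_cycle (hp.mapLe hH) hz ?_⟩
  rwa [SimpleGraph.Walk.edges_mapLe_eq_edges]

lemma isLargestComp_contains {H : SimpleGraph V} {c₁ c₀ : H.ConnectedComponent}
    (hc₁ : IsLargestComp H c₁) {Y W : Finset V} {m : ℝ} {N : ℕ}
    (hW : ∀ v, N < (compVerts H (H.connectedComponentMk v)).card → v ∈ W)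
    (hWY : ((W \ Y).card : ℝ) ≤ m) (hc₀ : ((Y \ compVerts H c₀).card : ℝ) < m)
    (hY : 3 * m ≤ Y.card) (hN : (N : ℝ) < Y.card - m) : c₀ = c₁ := by
  have hsum : ((Y ∩ compVerts H c₀).card : ℝ) + (Y \ compVerts H c₀).card = Y.card := by
    exact_mod_cast Finset.card_inter_add_card_sdiff Y (compVerts H c₀)
  have hc₁' : ((Y ∩ compVerts H c₀).card : ℝ) ≤ (compVerts H c₁).card := by
    exact_mod_cast (Finset.card_le_card Finset.inter_subset_right).trans (hc₁ c₀)
  have hsub : compVerts H c₁ ⊆ W := fun v hv => hW v <| by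
    rw [mem_compVerts.1 hv]
    have : (N : ℝ) < (compVerts H c₁).card := by linarith
    exact_mod_cast this
  obtain ⟨v, hv⟩ : (compVerts H c₁ ∩ compVerts H c₀).Nonempty := by
    by_contra hcon
    rw [Finset.not_nonempty_iff_eq_empty] at hcon
    have hcov : compVerts H c₁ ⊆ (W \ Y) ∪ (Y \ compVerts H c₀) := by
      intro v hv
      have hv₀ : v ∉ compVerts H c₀ := fun h => by
        have := Finset.mem_inter.2 ⟨hv, h⟩
        rw [hcon] at this
        exact absurd this (Finset.notMem_empty v)
      by_cases hY : v ∈ Y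
      · exact Finset.mem_union_right _ (Finset.mem_sdiff.2 ⟨hY, hv₀⟩)
      · exact Finset.mem_union_left _ (Finset.mem_sdiff.2 ⟨hsub hv, hY⟩)
    have : ((compVerts H c₁).card : ℝ) ≤ (W \ Y).card + (Y \ compVerts H c₀).card := by
      exact_mod_cast (Finset.card_le_card hcov).trans (Finset.card_union_le _ _)
    linarith
  rw [Finset.mem_inter, mem_compVerts, mem_compVerts] at hv
  rw [← hv.1, ← hv.2]

lemma abs_card_sub_card_le {P Q : V → Prop} [DecidablePred P] [DecidablePred Q] {B : Finset V}
    (h : ∀ v ∉ B, P v ↔ Q v) :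
    |((Finset.univ.filter P).card : ℝ) - (Finset.univ.filter Q).card| ≤ B.card := by
  have key : ∀ {P Q : V → Prop} [DecidablePred P] [DecidablePred Q], (∀ v ∉ B, P v ↔ Q v) →
      ((Finset.univ.filter P).card : ℝ) ≤ (Finset.univ.filter Q).card + B.card := by
    intro P Q _ _ h
    have : Finset.univ.filter P ⊆ Finset.univ.filter Q ∪ B := by
      intro v hv
      by_cases hB : v ∈ B
      · exact Finset.mem_union_right _ hB
      · exact Finset.mem_union_left _ (Finset.mem_filter.2
          ⟨Finset.mem_univ v, (h v hB).1 (Finset.mem_filter.1 hv).2⟩)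
    exact_mod_cast (Finset.card_le_card this).trans (Finset.card_union_le _ _)
  rw [abs_le]
  constructor
  · linarith [key fun v hv => (h v hv).symm]
  · linarith [key h]

theorem abs_core_degree_sub_alive_le {G : SimpleGraph V} {d r j : ℕ} {m τ : ℝ}
    {s u : Finset (Sym2 V)} {H₁ H : SimpleGraph V}
    (hH₁ : H₁ = perc G s) (hH : H = perc G u) (hsu : s ⊆ u) (hdeg : ∀ v, (nbrs G v).card ≤ d)
    (hg : r + 2 < G.girth) (hjr : j ≤ r) (hm : 1 ≤ m)
    (hU : ∀ F ⊆ edgeFinset' G, (F.card : ℝ) ≤ τ * Fintype.card V →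
      Unsplit (perc G (u \ F)) (survSet H₁ j) m)
    (hτ : Fintype.card V / (r + 1 : ℝ) + 1 ≤ τ * Fintype.card V)
    (hY : 1 + (d + 3) * m ≤ (survSet H₁ j).card)
    (hY' : ((survSet H j \ survSet H₁ j).card : ℝ) ≤ m)
    (hball : ((d + 1) ^ j : ℕ) < (survSet H₁ j).card - m)
    {c₁ : H.ConnectedComponent} (hc₁ : IsLargestComp H c₁) {k : ℕ}
    (hk : 2 ≤ k) :
    |((Finset.univ.filter fun v => ((twoCoreComp H c₁).neighborSet v).ncard = k).card : ℝ)
        - (Finset.univ.filter fun v => (alive H r v).card = k).card|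
      ≤ (Finset.univ.filter fun v => alive H₁ r v ≠ alive H r v).card
        + (d + 1) * m := by
  have hH₁G : H₁ ≤ G := hH₁ ▸ perc_le G s
  have hHG : H ≤ G := hH ▸ perc_le G u
  set Y := survSet H₁ j with hYdef
  set S := (twoCoreComp H c₁).support with hS
  set F := trunkEdges H S (r + 1) with hF
  set H' := perc G (u \ F) with hH'
  have hd0 : (0 : ℝ) ≤ d := Nat.cast_nonneg d
  have hY3 : 3 * m ≤ (Y.card : ℝ) := by nlinarith
  have hH₁H : H₁ ≤ H := hH₁ ▸ hH ▸ perc_mono G hsu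
  have hH'H : H' ≤ H := hH ▸ perc_mono G Finset.sdiff_subset
  have hFE : F ⊆ edgeFinset' G := trunkEdges_subset hHG S (r + 1)
  have hFc : (F.card : ℝ) ≤ Fintype.card V / (r + 1 : ℝ) := by
    rw [le_div_iff₀ (by positivity)]
    exact_mod_cast card_trunkEdges_mul_le H c₁ (r + 1)
  obtain ⟨c, hc⟩ := (hU F hFE (by linarith)).exists_comp (by linarith) hY3
  have hCne : (compVerts H' c).Nonempty := by
    by_contra h
    rw [Finset.not_nonempty_iff_eq_empty] at h
    rw [h, Finset.sdiff_empty] at hc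
    linarith
  obtain ⟨a₀, ha₀⟩ := hCne
  have hCsub : compVerts H' c ⊆ compVerts H (H.connectedComponentMk a₀) := fun a ha =>
    mem_compVerts_mk.2 (((SimpleGraph.ConnectedComponent.exact
      ((mem_compVerts.1 ha₀).trans (mem_compVerts.1 ha).symm))).mono hH'H)
  have hc₀ : H.connectedComponentMk a₀ = c₁ := by
    refine isLargestComp_contains hc₁ (Y := Y) (W := survSet H j) (m := m)
      (fun v hv => mem_survSet_of_card_lt hHG hdeg hv) hY' ?_ hY3 hball
    refine lt_of_le_of_lt ?_ hc
    exact_mod_cast Finset.card_le_card (Finset.sdiff_subset_sdiff subset_rfl hCsub)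
  rw [hc₀] at hCsub
  have hdeg' : ∀ v, (nbrs H' v).card ≤ d := fun v =>
    (Finset.card_le_card fun y hy => mem_nbrs.2 (perc_le G _ (mem_nbrs.1 hy))).trans (hdeg v)
  obtain ⟨x₀, hx₀c, hx₀S⟩ := exists_mem_support_of_unsplit hH'H hCsub hdeg' hc hm hY <| by
    intro v w hvw
    have hE : s(v, w) ∈ edgeFinset' G := mem_edgeFinset'.2 (perc_le G _ hvw)
    have heq : H'.deleteEdges {s(v, w)} = perc G (u \ insert s(v, w) F) := by
      ext a b
      rw [SimpleGraph.deleteEdges_adj, perc_adj, perc_adj, Finset.mem_sdiff, Finset.mem_sdiff,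
        Finset.mem_insert, Set.mem_singleton_iff]
      tauto
    rw [heq]
    refine hU _ (Finset.insert_subset hE hFE) ?_
    have : ((insert s(v, w) F).card : ℝ) ≤ F.card + 1 := by
      exact_mod_cast Finset.card_insert_le _ _
    linarith
  have htrunk : ∀ x y, H.Adj x y → surv H r x y → ¬ Leads H S x y → y ∉ compVerts H' c := by
    intro x y hxy hs hl hyc
    have hyS : y ∉ S := fun h => hl (.base h)
    have hbig : y ∈ bigVerts (off H S) (r + 1) :=
      mem_bigVerts_of_surv ((off_le H S).trans hHG) (hHG hxy) hg
        (surv_off_of_not_leads r hs hl)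
    have hcl : IsClosedIn H'
        (compVerts (off H S) ((off H S).connectedComponentMk y)) := by
      intro a b ha hab
      have haS := notMem_of_reachable_off hyS (mem_compVerts_mk.1 ha)
      have hbS : b ∉ S := fun hb => by
        refine (Finset.mem_sdiff.1 (perc_adj.1 hab).2).2
          (mem_trunkEdges_of_adj (hH'H hab) ?_ haS hb)
        exact (isClosedIn_bigVerts _ _).mem_of_reachable hbig (mem_compVerts_mk.1 ha)
      exact isClosedIn_compVerts _ _ a b ha ⟨hH'H hab, haS, hbS⟩
    have hsub := compVerts_subset hcl (mem_compVerts_mk.2 .rfl)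
    rw [mem_compVerts.1 hyc] at hsub
    exact notMem_of_reachable_off hyS (mem_compVerts_mk.1 (hsub hx₀c)) hx₀S
  have hcore : ∀ x y, H.Adj x y → surv H r x y → surv H r y x → x ∈ compVerts H' c →
      y ∈ compVerts H' c → (twoCoreComp H c₁).Adj x y := by
    intro x y hxy h h' hx hy
    refine twoCoreComp_adj_of_leads (mem_compVerts.1 (hCsub hx)) hxy ?_ ?_
    · by_contra hl
      exact htrunk x y hxy h hl hy
    · by_contra hl
      exact htrunk y x hxy.symm h' hl hx
  set N := Y \ compVerts H' c with hN
  set B := (Finset.univ.filter fun v => alive H₁ r v ≠ alive H r v) ∪ (N ∪ N.biUnion (nbrs G))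
    with hB
  have hBc : (B.card : ℝ)
      ≤ (Finset.univ.filter fun v => alive H₁ r v ≠ alive H r v).card + (d + 1) * m := by
    have h1 : B.card ≤ (Finset.univ.filter fun v => alive H₁ r v ≠ alive H r v).card
        + (N.card + N.card * d) :=
      (Finset.card_union_le _ _).trans (Nat.add_le_add_left ((Finset.card_union_le _ _).trans
        (Nat.add_le_add_left (Finset.card_biUnion_le_card_mul _ _ _ fun v _ => hdeg v) _)) _)
    have h2 : (B.card : ℝ) ≤ (Finset.univ.filter fun v => alive H₁ r v ≠ alive H r v).card
        + (N.card + N.card * d) := by exact_mod_cast h1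
    nlinarith
  refine (abs_card_sub_card_le (B := B) fun v hv => ?_).trans hBc
  rw [hB, Finset.mem_union, Finset.mem_union, not_or, not_or, Finset.mem_filter, Finset.mem_biUnion]
    at hv
  obtain ⟨hv1, hv2, hv3⟩ := hv
  have heq : alive H₁ r v = alive H r v := by
    by_contra h
    exact hv1 ⟨Finset.mem_univ v, h⟩
  have hsub : nbrs (twoCoreComp H c₁) v ⊆ alive H r v := fun y hy =>
    mem_alive.2 ⟨twoCoreComp_le H c₁ (mem_nbrs.1 hy), surv_of_twoCoreComp_adj r (mem_nbrs.1 hy)⟩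
  rw [← card_nbrs]
  by_cases h2 : 2 ≤ (alive H r v).card
  · have : nbrs (twoCoreComp H c₁) v = alive H r v := by
      refine hsub.antisymm fun y hy => ?_
      rw [← heq] at hy h2
      obtain ⟨hvy, hs⟩ := mem_alive.1 hy
      obtain ⟨z, hz, hzy⟩ := Finset.exists_mem_ne (s := alive H₁ r v) (by omega) y
      obtain ⟨hvz, hsz⟩ := mem_alive.1 hz
      have hs' : surv H₁ r y v := surv_of_succ r y v ⟨z, hzy, hvz, hsz⟩
      have hvY : v ∈ Y := mem_survSet.2 ⟨y, hvy, surv_of_le hjr hs⟩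
      have hyY : y ∈ Y := mem_survSet.2 ⟨v, hvy.symm, surv_of_le hjr hs'⟩
      have hvC : v ∈ compVerts H' c := by
        by_contra h
        exact hv2 (Finset.mem_sdiff.2 ⟨hvY, h⟩)
      have hyC : y ∈ compVerts H' c := by
        by_contra h
        exact hv3 ⟨y, Finset.mem_sdiff.2 ⟨hyY, h⟩, mem_nbrs.2 (hH₁G hvy.symm)⟩
      exact mem_nbrs.2 (hcore v y (hH₁H hvy) (surv_mono hH₁H _ _ _ hs)
        (surv_mono hH₁H _ _ _ hs') hvC hyC)
    rw [this]
  · have := Finset.card_le_card hsub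
    omega

end CoreDegree

section Extinction

open Filter Topology

lemma survival_map_lt {d : ℕ} (hd : 3 ≤ d) {p a x : ℝ} (hp : 0 < p) (hp1 : p ≤ 1) (ha : 0 ≤ a)
    (hfa : a = (1 - p + p * a) ^ (d - 1)) (hax : a < x) (hx : x < 1) :
    (1 - p + p * x) ^ (d - 1) < x := by
  have hconv := strictConvexOn_pow (show 2 ≤ d - 1 by omega)
  have h1a : 0 < 1 - a := by linarith
  have hpa : 1 - p + p * a < 1 := by nlinarith
  have h := hconv.2 (show 1 - p + p * a ∈ Set.Ici (0 : ℝ) by simp only [Set.mem_Ici]; nlinarith)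
    (show (1 : ℝ) ∈ Set.Ici 0 by simp) hpa.ne
    (show 0 < (1 - x) / (1 - a) by apply div_pos <;> linarith)
    (show 0 < (x - a) / (1 - a) by apply div_pos <;> linarith) (by field_simp; ring)
  simp only [smul_eq_mul, one_pow] at h
  rw [← hfa] at h
  have e1 : (1 - x) / (1 - a) * (1 - p + p * a) + (x - a) / (1 - a) * 1 = 1 - p + p * x := by
    field_simp; ring
  have e2 : (1 - x) / (1 - a) * a + (x - a) / (1 - a) * 1 = x := by
    field_simp; ring
  rwa [e1, e2] at h

lemma dieProb_nonneg (d : ℕ) {p : ℝ} (hp : 0 ≤ p) (hp1 : p ≤ 1) (r : ℕ) : 0 ≤ dieProb d p r := by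
  induction r with
  | zero => simp [dieProb]
  | succ r ih =>
    rw [dieProb]
    have := mul_nonneg hp ih
    exact pow_nonneg (by linarith) _

lemma dieProb_le_of_map_le {d : ℕ} {p x : ℝ} (hp : 0 ≤ p) (hp1 : p ≤ 1) (hx0 : 0 ≤ x)
    (hx : (1 - p + p * x) ^ (d - 1) ≤ x) (r : ℕ) : dieProb d p r ≤ x := by
  induction r with
  | zero => simpa [dieProb] using hx0
  | succ r ih =>
    rw [dieProb]
    have h0 := mul_nonneg hp (dieProb_nonneg d hp hp1 r)
    refine le_trans (pow_le_pow_left₀ (by linarith) ?_ _) hx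
    have := mul_le_mul_of_nonneg_left ih hp
    linarith

lemma dieProb_monotone (d : ℕ) {p : ℝ} (hp : 0 ≤ p) (hp1 : p ≤ 1) : Monotone (dieProb d p) := by
  refine monotone_nat_of_le_succ fun r => ?_
  induction r with
  | zero => simpa [dieProb] using dieProb_nonneg d hp hp1 1
  | succ r ih =>
    rw [dieProb, dieProb]
    have h0 := mul_nonneg hp (dieProb_nonneg d hp hp1 r)
    have := mul_le_mul_of_nonneg_left ih hp
    exact pow_le_pow_left₀ (by linarith) (by linarith) _

lemma tendsto_dieProb {d : ℕ} (hd : 3 ≤ d) {p q : ℝ} (hp : 0 < p) (hp1 : p ≤ 1) (hq0 : 0 ≤ q)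
    (hq1 : q < 1) (hq : q = (1 - p + p * q) ^ (d - 1)) :
    Tendsto (dieProb d p) atTop (𝓝 q) := by
  have hle : ∀ r, dieProb d p r ≤ q := dieProb_le_of_map_le hp.le hp1 hq0 hq.ge
  have hlim := tendsto_atTop_ciSup (dieProb_monotone d hp.le hp1)
    ⟨q, by rintro _ ⟨r, rfl⟩; exact hle r⟩
  generalize (⨆ r, dieProb d p r) = L at hlim
  have hLq : L ≤ q := le_of_tendsto' hlim hle
  have hL0 : 0 ≤ L := ge_of_tendsto' hlim (dieProb_nonneg d hp.le hp1)
  have hfix : L = (1 - p + p * L) ^ (d - 1) := by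
    refine tendsto_nhds_unique ((tendsto_add_atTop_iff_nat 1).2 hlim) ?_
    simp only [dieProb]
    exact ((hlim.const_mul p).const_add (1 - p)).pow (d - 1)
  rcases hLq.eq_or_lt with h | h
  · exact h ▸ hlim
  · exact absurd (survival_map_lt hd hp hp1 hL0 hfix h hq1) hq.le.not_gt

lemma exists_smaller_parameter {d : ℕ} (hd : 3 ≤ d) {p q : ℝ} (hp : 0 < p) (hp1 : p ≤ 1)
    (hq0 : 0 ≤ q) (hq1 : q < 1) (hq : q = (1 - p + p * q) ^ (d - 1)) {η : ℝ} (hη : 0 < η) :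
    ∃ p₁, 0 < p₁ ∧ p₁ < p ∧ p - p₁ ≤ η ∧ ∀ r, dieProb d p₁ r ≤ q + η := by
  obtain ⟨x, hqx, hx1, hxη⟩ : ∃ x, q < x ∧ x < 1 ∧ x ≤ q + η :=
    ⟨min ((q + 1) / 2) (q + η), by simp only [lt_min_iff]; constructor <;> linarith,
      (min_le_left _ _).trans_lt (by linarith), min_le_right _ _⟩
  have hlt := survival_map_lt hd hp hp1 hq0 hq hqx hx1
  have hcont : ContinuousAt (fun t : ℝ => (1 - t + t * x) ^ (d - 1)) p := by fun_prop
  obtain ⟨δ, hδ, hball⟩ := Metric.eventually_nhds_iff.1 (hcont.eventually_lt_const hlt)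
  have hm : 0 < min (δ / 2) (min η (p / 2)) := by positivity
  have h1 := min_le_left (δ / 2) (min η (p / 2))
  have h2 := (min_le_right (δ / 2) (min η (p / 2))).trans (min_le_left _ _)
  have h3 := (min_le_right (δ / 2) (min η (p / 2))).trans (min_le_right _ _)
  generalize min (δ / 2) (min η (p / 2)) = ρ at hm h1 h2 h3
  refine ⟨p - ρ, by linarith, by linarith, by linarith, fun r => le_trans ?_ hxη⟩
  refine dieProb_le_of_map_le (by linarith) (by linarith) (by linarith) (hball ?_).le r
  rw [Real.dist_eq, abs_lt]
  constructor <;> linarith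

lemma binomial_eq_core_density {d k : ℕ} (hk : k ≤ d) (hk1 : 1 ≤ k) {p q : ℝ} (hp : 0 ≤ p)
    (hp1 : p < 1) (hq0 : 0 ≤ q) (hq : q = (1 - p + p * q) ^ (d - 1)) :
    (d.choose k : ℝ) * p ^ k * (1 - q) ^ k * q / (1 - p + p * q) ^ (k - 1)
      = d.choose k * (p * (1 - q)) ^ k * (1 - p * (1 - q)) ^ (d - k) := by
  have hpos : 0 < 1 - p + p * q := by nlinarith [mul_nonneg hp hq0]
  have he : d - 1 = (k - 1) + (d - k) := by omega
  have e : 1 - p * (1 - q) = 1 - p + p * q := by ring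
  rw [e, mul_pow, div_eq_iff (pow_pos hpos _).ne']
  have h2 : q = (1 - p + p * q) ^ (k - 1) * (1 - p + p * q) ^ (d - k) := by
    rwa [← pow_add, ← he]
  calc _ = d.choose k * p ^ k * (1 - q) ^ k
        * ((1 - p + p * q) ^ (k - 1) * (1 - p + p * q) ^ (d - k)) := by rw [← h2]
    _ = _ := by ring

lemma exists_binomial_close {d : ℕ} (hd : 3 ≤ d) {p q : ℝ} (hp : 0 < p) (hp1 : p < 1)
    (hq0 : 0 ≤ q) (hq1 : q < 1) (hq : q = (1 - p + p * q) ^ (d - 1)) {η : ℝ} (hη : 0 < η) :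
    ∃ r₀, ∀ r ≥ r₀, ∀ k, 1 ≤ k → k ≤ d →
      |(d.choose k : ℝ) * (p * (1 - dieProb d p r)) ^ k * (1 - p * (1 - dieProb d p r)) ^ (d - k)
        - (d.choose k : ℝ) * p ^ k * (1 - q) ^ k * q / (1 - p + p * q) ^ (k - 1)| < η := by
  have hlim := tendsto_dieProb hd hp hp1.le hq0 hq1 hq
  have hk : ∀ k ∈ Finset.range (d + 1), ∀ᶠ r in atTop,
      |(d.choose k : ℝ) * (p * (1 - dieProb d p r)) ^ k * (1 - p * (1 - dieProb d p r)) ^ (d - k)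
        - d.choose k * (p * (1 - q)) ^ k * (1 - p * (1 - q)) ^ (d - k)| < η := by
    intro k _
    have hT := (hlim.const_sub 1).const_mul p
    have := ((hT.pow k).const_mul (d.choose k : ℝ)).mul ((hT.const_sub 1).pow (d - k))
    exact (Metric.tendsto_nhds.1 this) η hη
  obtain ⟨r₀, hr₀⟩ := eventually_atTop.1 ((Filter.eventually_all_finset _).2 hk)
  refine ⟨r₀, fun r hr k hk1 hkd => ?_⟩
  rw [binomial_eq_core_density hkd hk1 hp.le hp1 hq0 hq]
  exact hr₀ r hr k (Finset.mem_range.2 (by omega))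

end Extinction

section Typical

/-- The statistics of `alive (perc G s) r` are within `η n` of their expectations when `G` is
`d`-regular of large girth and `s` is a random set of edges of density `p`. -/
def Typical (G : SimpleGraph V) (d : ℕ) (p : ℝ) (r : ℕ) (η : ℝ) (s : Finset (Sym2 V)) : Prop :=
  |∑ v, ((alive (perc G s) r v).card : ℝ) - Fintype.card V * (d * (p * (1 - dieProb d p r)))|
      < η * Fintype.card V ∧
    ∀ k ≤ d, |((Finset.univ.filter fun v => (alive (perc G s) r v).card = k).card : ℝ)
      - Fintype.card V * (d.choose k * (p * (1 - dieProb d p r)) ^ k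
        * (1 - p * (1 - dieProb d p r)) ^ (d - k))| < η * Fintype.card V

lemma bexp_aliveSum (G : SimpleGraph V) (p : ℝ) (r : ℕ) (φ : ℕ → ℝ) {a : ℝ}
    (h : ∀ v, bexp p (edgeFinset' G) (fun s => φ (alive (perc G s) r v).card) = a) :
    bexp p (edgeFinset' G) (aliveSum G r φ) = Fintype.card V * a := by
  have h1 : aliveSum G r φ = fun s => ∑ v ∈ Finset.univ, φ (alive (perc G s) r v).card := rfl
  rw [h1, bexp_sum p (edgeFinset' G) Finset.univ (fun v s => φ (alive (perc G s) r v).card)]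
  simp [h, Finset.card_univ]

end Typical

lemma exists_not_typical_bound (d r : ℕ) {p η : ℝ} (h0 : 0 ≤ p) (h1 : p ≤ 1) (hη : 0 < η) :
    ∃ c > (0 : ℝ), ∀ (V : Type) [Fintype V] [DecidableEq V] (G : SimpleGraph V),
      (∀ v, (nbrs G v).card = d) → 2 * r + 2 < G.girth →
        bexp p (edgeFinset' G) (fun s => if Typical G d p r η s then (0 : ℝ) else 1)
          ≤ (2 * d + 4) * Real.exp (-c * Fintype.card V) := by
  obtain ⟨c, hc, hconc⟩ := exists_aliveSum_concentration d r h0 h1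
    (show (0 : ℝ) ≤ d + 1 by positivity) hη
  refine ⟨c, hc, fun V _ _ G hG hg => ?_⟩
  set E := edgeFinset' G
  set φ : ℕ → ℕ → ℝ := fun k a => if a = k then 1 else 0 with hφ
  have hlin := hconc V G (fun v => (hG v).le) (fun a => (a : ℝ)) fun k hk =>
    ⟨Nat.cast_nonneg k, by have : (k : ℝ) ≤ d := by exact_mod_cast hk
                           linarith⟩
  have hind := fun k => hconc V G (fun v => (hG v).le) (φ k) fun a _ => by
    have : (0 : ℝ) ≤ d := Nat.cast_nonneg d
    simp only [hφ]
    split_ifs <;> constructor <;> linarith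
  have e1 := bexp_aliveSum G p r (fun a => (a : ℝ)) fun v => bexp_card_alive hG p hg v
  have e2 := fun k => bexp_aliveSum G p r (φ k) fun v => bexp_card_alive_eq hG p hg v k
  rw [e1] at hlin
  simp only [e2] at hind
  have hcard : ∀ k s, aliveSum G r (φ k) s
      = ((Finset.univ.filter fun v => (alive (perc G s) r v).card = k).card : ℝ) := fun k s => by
    simp [aliveSum, hφ]
  set X : Finset (Sym2 V) → ℝ := fun s => if η * Fintype.card V ≤ |aliveSum G r (fun a => (a : ℝ)) s
    - Fintype.card V * (d * (p * (1 - dieProb d p r)))| then (1 : ℝ) else 0 with hX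
  set Z : ℕ → Finset (Sym2 V) → ℝ := fun k s => if η * Fintype.card V ≤ |aliveSum G r (φ k) s
    - Fintype.card V * (d.choose k * (p * (1 - dieProb d p r)) ^ k
        * (1 - p * (1 - dieProb d p r)) ^ (d - k))| then (1 : ℝ) else 0 with hZ
  have hX0 : ∀ s, 0 ≤ X s := fun s => by simp only [hX]; split_ifs <;> norm_num
  have hZ0 : ∀ k s, 0 ≤ Z k s := fun k s => by simp only [hZ]; split_ifs <;> norm_num
  calc bexp p E (fun s => if Typical G d p r η s then (0 : ℝ) else 1)
      ≤ bexp p E (fun s => X s + ∑ k ∈ Finset.range (d + 1), Z k s) := by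
        refine bexp_mono h0 h1 fun s _ => ?_
        have hs0 : 0 ≤ ∑ k ∈ Finset.range (d + 1), Z k s := Finset.sum_nonneg fun k _ => hZ0 k s
        split_ifs with ht
        · linarith [hX0 s]
        · rw [Typical, not_and_or] at ht
          rcases ht with ht | ht
          · have : X s = 1 := if_pos (not_lt.1 ht)
            linarith
          · push Not at ht
            obtain ⟨k, hk, hk'⟩ := ht
            have : Z k s = 1 := if_pos (by rw [hcard]; exact hk')
            have := Finset.single_le_sum (f := fun k => Z k s) (fun k _ => hZ0 k s)
              (Finset.mem_range.2 (Nat.lt_succ_of_le hk))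
            linarith [hX0 s]
    _ = bexp p E X + ∑ k ∈ Finset.range (d + 1), bexp p E (Z k) := by
        rw [bexp_add, bexp_sum]
    _ ≤ 2 * Real.exp (-c * Fintype.card V)
        + ∑ k ∈ Finset.range (d + 1), 2 * Real.exp (-c * Fintype.card V) :=
        add_le_add hlin (Finset.sum_le_sum fun k _ => hind k)
    _ = _ := by simp; ring

section Deterministic

lemma card_alive_ne_le (G : SimpleGraph V) {s u : Finset (Sym2 V)} (hsu : s ⊆ u) (r : ℕ) :
    ((Finset.univ.filter fun v => alive (perc G s) r v ≠ alive (perc G u) r v).card : ℝ)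
      ≤ ∑ v, ((alive (perc G u) r v).card : ℝ) - ∑ v, ((alive (perc G s) r v).card : ℝ) := by
  rw [← Finset.sum_sub_distrib, Finset.card_filter]
  push_cast
  refine Finset.sum_le_sum fun v _ => ?_
  have hsub := alive_mono (perc_mono G hsu) r v
  split_ifs with h
  · have h2 := Finset.card_lt_card (hsub.ssubset_of_ne h)
    have : ((alive (perc G s) r v).card : ℝ) + 1 ≤ (alive (perc G u) r v).card := by
      exact_mod_cast h2
    linarith
  · have : ((alive (perc G s) r v).card : ℝ) ≤ (alive (perc G u) r v).card := by
      exact_mod_cast Finset.card_le_card hsub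
    linarith

lemma card_survSet_sdiff_le (G : SimpleGraph V) (s u : Finset (Sym2 V)) (j : ℕ) :
    (survSet (perc G u) j \ survSet (perc G s) j).card
      ≤ (Finset.univ.filter fun v => alive (perc G s) j v ≠ alive (perc G u) j v).card := by
  refine Finset.card_le_card fun v hv => ?_
  simp only [survSet, Finset.mem_sdiff, Finset.mem_filter, Finset.mem_univ, true_and] at hv ⊢
  exact fun h => hv.2 (h ▸ hv.1)

lemma sum_card_alive_le {G : SimpleGraph V} {d : ℕ} (hG : ∀ v, (nbrs G v).card ≤ d)
    (s : Finset (Sym2 V)) (j : ℕ) :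
    ∑ v, ((alive (perc G s) j v).card : ℝ) ≤ d * (survSet (perc G s) j).card := by
  rw [survSet, Finset.card_filter, Nat.cast_sum, Finset.mul_sum]
  refine Finset.sum_le_sum fun v _ => ?_
  split_ifs with h
  · have := (Finset.card_le_card (alive_subset_nbrs (perc_le G s) j v)).trans (hG v)
    simpa using (by exact_mod_cast this : ((alive (perc G s) j v).card : ℝ) ≤ d)
  · simp [Finset.not_nonempty_iff_eq_empty.1 h]

lemma girth_le_card {G : SimpleGraph V} : G.girth ≤ Fintype.card V := by
  by_cases h : G.IsAcyclic
  · simp [SimpleGraph.girth_eq_zero.2 h]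
  · obtain ⟨a, w, hw, hg⟩ := SimpleGraph.exists_girth_eq_length.2 h
    rw [hg]
    have hnd := hw.support_nodup
    have := hnd.length_le_card
    simpa using this

lemma sum_card_alive_sub_le {G : SimpleGraph V} {d r : ℕ} {p p₁ q η : ℝ} {s u : Finset (Sym2 V)}
    (hd : 1 ≤ d) (hp1 : p ≤ 1) (h0 : 0 ≤ p₁) (hlt : p₁ ≤ p) (hdiff : p - p₁ ≤ η) (hq0 : 0 ≤ q)
    (hr : q - η ≤ dieProb d p r) (hr₁ : dieProb d p₁ r ≤ q + η)
    (hs : Typical G d p₁ r η s) (hu : Typical G d p r η u) :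
    ∑ v, ((alive (perc G u) r v).card : ℝ) - ∑ v, ((alive (perc G s) r v).card : ℝ)
      ≤ 5 * d * η * Fintype.card V := by
  have h1 := (abs_lt.1 hs.1).1
  have h2 := (abs_lt.1 hu.1).2
  have hn : (0 : ℝ) ≤ Fintype.card V := Nat.cast_nonneg _
  have hd' : (1 : ℝ) ≤ d := by exact_mod_cast hd
  have hη : 0 ≤ η := by linarith
  have h3 : p * (1 - dieProb d p r) - p₁ * (1 - dieProb d p₁ r) ≤ 3 * η := by
    nlinarith [mul_nonneg (h0.trans hlt) (sub_nonneg.2 hr), mul_nonneg h0 (sub_nonneg.2 hr₁),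
      mul_nonneg (sub_nonneg.2 hlt) hq0, mul_nonneg (sub_nonneg.2 hp1) hη,
      mul_nonneg (sub_nonneg.2 (hlt.trans hp1)) hη]
  have h4 : Fintype.card V * (d * (p * (1 - dieProb d p r)))
      - Fintype.card V * (d * (p₁ * (1 - dieProb d p₁ r))) ≤ Fintype.card V * (d * (3 * η)) := by
    rw [← mul_sub, ← mul_sub]
    gcongr
  nlinarith [mul_nonneg (mul_nonneg hn hη) (sub_nonneg.2 hd')]

lemma le_card_survSet {G : SimpleGraph V} {d j : ℕ} {p p₁ q η : ℝ} {s : Finset (Sym2 V)}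
    (hdeg : ∀ v, (nbrs G v).card ≤ d)
    (hd : 1 ≤ d) (hp1 : p ≤ 1) (h0 : 0 ≤ p₁) (hlt : p₁ ≤ p) (hdiff : p - p₁ ≤ η) (hq0 : 0 ≤ q)
    (hj₁ : dieProb d p₁ j ≤ q + η) (hs : Typical G d p₁ j η s) :
    (p * (1 - q) - 3 * η) * Fintype.card V ≤ (survSet (perc G s) j).card := by
  have h1 := (abs_lt.1 hs.1).1
  have h2 := sum_card_alive_le hdeg s j
  have hn : (0 : ℝ) ≤ Fintype.card V := Nat.cast_nonneg _
  have hd' : (1 : ℝ) ≤ d := by exact_mod_cast hd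
  have hη : 0 ≤ η := by linarith
  have h3 : p * (1 - q) - 2 * η ≤ p₁ * (1 - dieProb d p₁ j) := by
    nlinarith [mul_nonneg h0 (sub_nonneg.2 hj₁), mul_nonneg (sub_nonneg.2 hlt) hq0,
      mul_nonneg (sub_nonneg.2 (hlt.trans hp1)) hη]
  have h4 : Fintype.card V * (d * (p * (1 - q) - 2 * η))
      ≤ Fintype.card V * (d * (p₁ * (1 - dieProb d p₁ j))) := by gcongr
  have h5 : (d : ℝ) * ((p * (1 - q) - 3 * η) * Fintype.card V)
      ≤ d * (survSet (perc G s) j).card := by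
    nlinarith [mul_nonneg (mul_nonneg hn hη) (sub_nonneg.2 hd')]
  exact le_of_mul_le_mul_left h5 (by linarith)

lemma abs_core_degree_sub_alive_le_of_typical {G : SimpleGraph V} {d j r K : ℕ}
    {p p₁ q ε η τ : ℝ} {s t : Finset (Sym2 V)} (hG : ∀ v, (nbrs G v).card = d) (hd : 1 ≤ d)
    (hp1 : p ≤ 1) (h0 : 0 ≤ p₁) (hlt : p₁ ≤ p) (hdiff : p - p₁ ≤ η) (hq0 : 0 ≤ q)
    (hη : 5 * d * η = ε) (hεq : (d + 3) * ε ≤ p * (1 - q) / 4)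
    (hj : q - η ≤ dieProb d p j) (hr : q - η ≤ dieProb d p r)
    (hdie₁ : ∀ i, dieProb d p₁ i ≤ q + η)
    (hg : 2 * r + 2 < G.girth) (hjr : j ≤ r) (hK : K ≤ j + 1)
    (hτj : τ * (2 * (d + 1) ^ (j + 1)) ≤ ε / 2)
    (hτ : Fintype.card V / (r + 1 : ℝ) + 1 ≤ τ * Fintype.card V)
    (hn1 : 1 ≤ ε * Fintype.card V) (hn2 : 1 ≤ p * (1 - q) / 4 * Fintype.card V)
    (hn3 : (d + 1 : ℝ) ^ j < p * (1 - q) / 4 * Fintype.card V)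
    (hs₁ : Typical G d p₁ j η s) (hs₂ : Typical G d p₁ r η s)
    (hu₁ : Typical G d p j η (s ∪ t)) (hu₂ : Typical G d p r η (s ∪ t))
    (hbad : ¬ BadSplit G K τ (ε / 2) s t)
    {c₁ : (perc G (s ∪ t)).ConnectedComponent} (hc₁ : IsLargestComp (perc G (s ∪ t)) c₁)
    {k : ℕ} (hk : 2 ≤ k) :
    |((Finset.univ.filter fun v =>
        ((twoCoreComp (perc G (s ∪ t)) c₁).neighborSet v).ncard = k).card : ℝ)
        - (Finset.univ.filter fun v => (alive (perc G (s ∪ t)) r v).card = k).card|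
      ≤ (d + 2) * (ε * Fintype.card V) := by
  have hdeg : ∀ v, (nbrs G v).card ≤ d := fun v => (hG v).le
  have hd' : (1 : ℝ) ≤ d := by exact_mod_cast hd
  have hη0 : 0 ≤ η := by linarith
  have hηε : 5 * η ≤ ε := by nlinarith
  have hε4 : 4 * ε ≤ p * (1 - q) / 4 := by nlinarith
  have hn : (0 : ℝ) ≤ Fintype.card V := Nat.cast_nonneg _
  have hY := le_card_survSet hdeg hd hp1 h0 hlt hdiff hq0 (hdie₁ j) hs₁
  have hY2 : p * (1 - q) * (3 / 4) * Fintype.card V ≤ (survSet (perc G s) j).card :=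
    le_trans (mul_le_mul_of_nonneg_right (by linarith) hn) hY
  have hεn : (d + 3) * (ε * Fintype.card V) ≤ p * (1 - q) / 4 * Fintype.card V := by
    rw [← mul_assoc]
    exact mul_le_mul_of_nonneg_right hεq hn
  have hεn0 : 0 ≤ (d + 2) * (ε * Fintype.card V) := by
    apply mul_nonneg <;> linarith
  have hdj := (Nat.cast_le (α := ℝ)).2 (card_survSet_sdiff_le G s (s ∪ t) j)
  have hdj2 := card_alive_ne_le G (Finset.subset_union_left (s₁ := s) (s₂ := t)) j
  have hdr2 := card_alive_ne_le G (Finset.subset_union_left (s₁ := s) (s₂ := t)) r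
  have hdj3 := sum_card_alive_sub_le hd hp1 h0 hlt hdiff hq0 hj (hdie₁ j) hs₁ hu₁
  have hdr3 := sum_card_alive_sub_le hd hp1 h0 hlt hdiff hq0 hr (hdie₁ r) hs₂ hu₂
  rw [hη] at hdj3 hdr3
  refine (abs_core_degree_sub_alive_le (j := j) (m := ε * Fintype.card V) (τ := τ) rfl rfl
    (Finset.subset_union_left (s₁ := s) (s₂ := t)) hdeg (by omega) hjr hn1 ?_ hτ (by linarith)
    (by linarith) ?_ hc₁ hk).trans (by linarith)
  · intro F hFE hF
    have haff : ((affected G (j + 1) F).card : ℝ) ≤ ε / 2 * Fintype.card V := by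
      calc ((affected G (j + 1) F).card : ℝ) ≤ F.card * (2 * (d + 1) ^ (j + 1)) := by
            exact_mod_cast card_affected_le hdeg (j + 1) F
        _ ≤ τ * Fintype.card V * (2 * (d + 1) ^ (j + 1)) := by gcongr
        _ = τ * (2 * (d + 1) ^ (j + 1)) * Fintype.card V := by ring
        _ ≤ _ := by gcongr
    have := unsplit_of_not_badSplit hbad hK (by omega) hFE hF haff
    rwa [show 2 * (ε / 2 * (Fintype.card V : ℝ)) = ε * Fintype.card V by ring] at this
  · push_cast
    linarith

end Deterministic

lemma percProb_eq_bexp (G : SimpleGraph V) (p : ℝ)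
    (P : SimpleGraph V → Prop) :
    percProb G p P = bexp p (edgeFinset' G) (fun s => if P (perc G s) then 1 else 0) :=
  Finset.sum_congr rfl fun s hs => by
    rw [fromEdgeSet_eq_perc (Finset.mem_powerset.1 hs)]

lemma mul_exp_le_exp {M c x : ℝ} (h : M ≤ c * x) :
    M * Real.exp (-(2 * c) * x) ≤ Real.exp (-c * x) := by
  have h1 : M ≤ Real.exp (c * x) := by linarith [Real.add_one_le_exp (c * x)]
  calc M * Real.exp (-(2 * c) * x) ≤ Real.exp (c * x) * Real.exp (-(2 * c) * x) := by gcongr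
    _ = Real.exp (-c * x) := by rw [← Real.exp_add]; ring_nf

lemma div_add_one_le_mul {τ i r n : ℝ} (hτ : 0 < τ) (hi : 2 < i * τ) (hir : i ≤ r)
    (hn : 2 ≤ τ * n) : n / (r + 1) + 1 ≤ τ * n := by
  have hr : 2 ≤ τ * (r + 1) := by nlinarith
  have hr0 : 0 < r + 1 := pos_of_mul_pos_right (by linarith) hτ.le
  have hn0 : 0 < n := pos_of_mul_pos_right (by linarith) hτ.le
  have h1 : n / (r + 1) ≤ τ / 2 * n := by
    rw [div_le_iff₀ hr0]
    nlinarith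
  linarith

lemma abs_div_sub_lt {x y n a η β β' ε : ℝ} (hn : 0 < n) (hxy : |x - y| ≤ a * n)
    (hy : |y - n * β'| < η * n) (hβ : |β' - β| < η) (hε : a + 2 * η ≤ ε) : |x / n - β| < ε := by
  have h1 : x - β * n = (x - y) + (y - n * β') + (β' - β) * n := by ring
  have h2 : |(β' - β) * n| ≤ η * n := by
    rw [abs_mul, abs_of_pos hn]
    gcongr
  rw [show x / n - β = (x - β * n) / n by field_simp, abs_div, abs_of_pos hn, div_lt_iff₀ hn, h1]
  have h3 := abs_add_three (x - y) (y - n * β') ((β' - β) * n)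
  nlinarith

lemma bexp_union_bound {α : Type*} [DecidableEq α] {p p₁ p₂ : ℝ} (h01 : 0 ≤ p₁) (h11 : p₁ ≤ 1)
    (h02 : 0 ≤ p₂) (h12 : p₂ ≤ 1) (hpp : 1 - p = (1 - p₁) * (1 - p₂)) {E : Finset α}
    {P S₁ S₂ U₁ U₂ : Finset α → Prop} {B : Finset α → Finset α → Prop}
    {x y : ℝ} (himp : ∀ s ⊆ E, ∀ t ⊆ E, S₁ s → S₂ s → U₁ (s ∪ t) → U₂ (s ∪ t) → ¬ B s t → P (s ∪ t))
    (hB : ∀ s, bexp p₂ E (fun t => if B s t then (1 : ℝ) else 0) ≤ y)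
    (hS₁ : bexp p₁ E (fun s => if S₁ s then (0 : ℝ) else 1) ≤ x)
    (hS₂ : bexp p₁ E (fun s => if S₂ s then (0 : ℝ) else 1) ≤ x)
    (hU₁ : bexp p E (fun s => if U₁ s then (0 : ℝ) else 1) ≤ x)
    (hU₂ : bexp p E (fun s => if U₂ s then (0 : ℝ) else 1) ≤ x) :
    1 - (4 * x + y) ≤ bexp p E (fun s => if P s then 1 else 0) := by
  rw [bexp_sprinkle hpp] at hU₁ hU₂ ⊢
  have hB' := (bexp_mono h01 h11 (E := E) fun s _ => hB s).trans (bexp_const p₁ E y).le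
  calc 1 - (4 * x + y) ≤ 1 + - bexp p₁ E (fun s => if S₁ s then (0 : ℝ) else 1)
        + - bexp p₁ E (fun s => if S₂ s then (0 : ℝ) else 1)
        + - bexp p₁ E (fun s => bexp p₂ E (fun t => if U₁ (s ∪ t) then (0 : ℝ) else 1))
        + - bexp p₁ E (fun s => bexp p₂ E (fun t => if U₂ (s ∪ t) then (0 : ℝ) else 1))
        + - bexp p₁ E (fun s => bexp p₂ E (fun t => if B s t then (1 : ℝ) else 0)) := by linarith
    _ = bexp p₁ E (fun s => bexp p₂ E (fun t => 1 + -(if S₁ s then (0 : ℝ) else 1)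
        + -(if S₂ s then (0 : ℝ) else 1) + -(if U₁ (s ∪ t) then (0 : ℝ) else 1)
        + -(if U₂ (s ∪ t) then (0 : ℝ) else 1) + -(if B s t then (1 : ℝ) else 0))) := by
        simp only [bexp_add, bexp_neg, bexp_const]
    _ ≤ _ := by
        refine bexp_mono h01 h11 fun s hs => bexp_mono h02 h12 fun t ht => ?_
        by_cases h : S₁ s ∧ S₂ s ∧ U₁ (s ∪ t) ∧ U₂ (s ∪ t) ∧ ¬ B s t
        · obtain ⟨h1, h2, h3, h4, h5⟩ := h
          rw [if_pos (himp s hs t ht h1 h2 h3 h4 h5)]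
          simp [h1, h2, h3, h4, h5]
        · have : (0 : ℝ) ≤ if P (s ∪ t) then 1 else 0 := by split_ifs <;> norm_num
          refine le_trans ?_ this
          split_ifs <;> first | norm_num; done | exact absurd (by simp_all) h

theorem two_core_degree_distribution (d : ℕ) (hd : 3 ≤ d) (p q : ℝ)
    (hp : 1 / ((d : ℝ) - 1) < p) (hp1 : p < 1)
    (hq0 : 0 ≤ q) (hq1 : q < 1)
    (hq : q = (1 - p + p * q) ^ (d - 1))
    (ε b : ℝ) (hε : 0 < ε) (hb : 0 < b) :
    ∃ c > (0:ℝ), ∃ R : ℕ, 0 < R ∧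
      ∀ (V : Type) [Fintype V] [DecidableEq V] (G : SimpleGraph V),
        IsRegularExpander G b d → (R : ℕ∞) ≤ G.girth →
        1 - Real.exp (-c * Fintype.card V) ≤
          percProb G p (fun H =>
            ∀ c₁ : H.ConnectedComponent, IsLargestComp H c₁ →
              ∀ k : ℕ, 2 ≤ k → k ≤ d →
                |((Finset.univ.filter
                      (fun v : V => ((twoCoreComp H c₁).neighborSet v).ncard = k)).card : ℝ)
                      / Fintype.card V
                  - (d.choose k : ℝ) * p ^ k * (1 - q) ^ k * q
                      / (1 - p + p * q) ^ (k - 1)| < ε) := by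
  have hd3 : (3 : ℝ) ≤ d := by exact_mod_cast hd
  have hp0 : 0 < p := lt_trans (by apply div_pos <;> linarith) hp
  have hT : 0 < p * (1 - q) := mul_pos hp0 (by linarith)
  obtain ⟨ε₁, hε₁, hε₁ε, hε₁T⟩ : ∃ ε₁ : ℝ, 0 < ε₁ ∧ (d + 3) * ε₁ ≤ ε / 2
      ∧ (d + 3) * ε₁ ≤ p * (1 - q) / 4 := by
    have hd0 : (0 : ℝ) < d + 3 := by linarith
    refine ⟨min (ε / 2) (p * (1 - q) / 4) / (d + 3), by positivity, ?_, ?_⟩ <;>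
      rw [mul_div_cancel₀ _ hd0.ne']
    · exact min_le_left _ _
    · exact min_le_right _ _
  obtain ⟨η, hη, hηε⟩ : ∃ η : ℝ, 0 < η ∧ 5 * d * η = ε₁ :=
    ⟨ε₁ / (5 * d), by positivity, by field_simp⟩
  have hηε₁ : 2 * η ≤ ε₁ := by nlinarith
  obtain ⟨p₁, hp₁0, hp₁p, hdiff, hdie₁⟩ := exists_smaller_parameter hd hp0 hp1.le hq0 hq1 hq hη
  obtain ⟨p₂, hp₂0, hp₂1, hpp⟩ : ∃ p₂ : ℝ, 0 < p₂ ∧ p₂ ≤ 1 ∧ 1 - p = (1 - p₁) * (1 - p₂) := by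
    have h1 : 0 < 1 - p₁ := by linarith
    refine ⟨(p - p₁) / (1 - p₁), div_pos (by linarith) h1, ?_, ?_⟩
    · rw [div_le_one h1]; linarith
    · field_simp; ring
  obtain ⟨c₀, hc₀, τ₀, hτ₀, K, hbad⟩ := exists_badSplit_bound d hb (half_pos hε₁) hp₂0 hp₂1
  have hlim := tendsto_dieProb hd hp0 hp1.le hq0 hq1 hq
  obtain ⟨j₀, hj₀⟩ := Filter.eventually_atTop.1
    (hlim.eventually_const_le (show q - η < q by linarith))
  obtain ⟨r₀, hr₀⟩ := exists_binomial_close hd hp0 hp1 hq0 hq1 hq hη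
  obtain ⟨j, hj0, hjK⟩ : ∃ j, j₀ ≤ j ∧ K ≤ j + 1 := ⟨max j₀ K, le_max_left _ _, by omega⟩
  obtain ⟨τ, hτpos, hττ₀, hτj⟩ : ∃ τ : ℝ, 0 < τ ∧ τ ≤ τ₀
      ∧ τ * (2 * (d + 1) ^ (j + 1)) ≤ ε₁ / 2 := by
    have hA : (0 : ℝ) < 2 * (d + 1) ^ (j + 1) := by positivity
    refine ⟨min τ₀ (ε₁ / 2 / (2 * (d + 1) ^ (j + 1))), by positivity, min_le_left _ _, ?_⟩
    rw [← le_div_iff₀ hA]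
    exact min_le_right _ _
  obtain ⟨i, hi⟩ := exists_nat_gt (2 / τ)
  obtain ⟨r, hrj, hrr, hri⟩ : ∃ r, j ≤ r ∧ r₀ ≤ r ∧ i ≤ r :=
    ⟨max j (max r₀ i), by omega, by omega, by omega⟩
  obtain ⟨c₁, hc₁, hb₁⟩ := exists_not_typical_bound d j hp₁0.le (hp₁p.trans hp1).le hη
  obtain ⟨c₂, hc₂, hb₂⟩ := exists_not_typical_bound d r hp₁0.le (hp₁p.trans hp1).le hη
  obtain ⟨c₃, hc₃, hb₃⟩ := exists_not_typical_bound d j hp0.le hp1.le hη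
  obtain ⟨c₄, hc₄, hb₄⟩ := exists_not_typical_bound d r hp0.le hp1.le hη
  obtain ⟨c, hc, h20, h21, h22, h23, h24⟩ : ∃ c : ℝ, 0 < c ∧ 2 * c ≤ c₀ ∧ 2 * c ≤ c₁ ∧ 2 * c ≤ c₂
      ∧ 2 * c ≤ c₃ ∧ 2 * c ≤ c₄ := by
    refine ⟨min c₀ (min c₁ (min c₂ (min c₃ c₄))) / 2, by positivity, ?_⟩
    rw [mul_div_cancel₀ _ two_ne_zero]
    simp
  obtain ⟨N, hN⟩ := exists_nat_gt (max (2 / τ) (max (1 / ε₁)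
    (max ((d + 1 : ℝ) ^ j / (p * (1 - q) / 4)) (max (1 / (p * (1 - q) / 4)) ((8 * d + 19) / c)))))
  simp only [max_lt_iff] at hN
  refine ⟨c, hc, max N (2 * r + 3), by omega, fun V _ _ G hexp hgirth => ?_⟩
  have hgirth' : max N (2 * r + 3) ≤ G.girth := by exact_mod_cast hgirth
  have hg : 2 * r + 2 < G.girth := by omega
  have hcard := girth_le_card (G := G)
  have hG : ∀ v, (nbrs G v).card = d := fun v => (card_nbrs G v).trans (hexp.2 v)
  have hVpos : 0 < Fintype.card V := by omega
  have hnN : (N : ℝ) ≤ Fintype.card V := by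
    exact_mod_cast (show N ≤ Fintype.card V by omega)
  have hbad' := fun s => hbad τ hττ₀ V G hexp.1 hVpos s
  have hb₁' := hb₁ V G hG (by omega)
  have hb₂' := hb₂ V G hG hg
  have hb₃' := hb₃ V G hG (by omega)
  have hb₄' := hb₄ V G hG hg
  have hn : (0 : ℝ) < Fintype.card V := by exact_mod_cast hVpos
  obtain ⟨hN1, hN2, hN3, hN4, hN5⟩ := hN
  rw [div_lt_iff₀ (by positivity)] at hN1 hN2 hN3 hN4 hN5
  have hmul : ∀ {a : ℝ}, 0 < a → (N : ℝ) * a ≤ a * Fintype.card V := fun ha => by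
    rw [mul_comm]; gcongr
  have hexp_le : ∀ {c' : ℝ}, 2 * c ≤ c' → Real.exp (-c' * Fintype.card V)
      ≤ Real.exp (-(2 * c) * Fintype.card V) := fun h => by gcongr
  have hd4 : (0 : ℝ) ≤ 2 * d + 4 := by linarith
  have hfin := mul_exp_le_exp (M := 8 * d + 19) (c := c) (x := Fintype.card V)
    (by linarith [hmul hc])
  have hT4 : 0 < p * (1 - q) / 4 := by linarith only [hT]
  rw [percProb_eq_bexp]
  refine le_trans ?_ (bexp_union_bound hp₁0.le (hp₁p.trans hp1).le hp₂0.le hp₂1 hpp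
    (S₁ := Typical G d p₁ j η) (S₂ := Typical G d p₁ r η) (U₁ := Typical G d p j η)
    (U₂ := Typical G d p r η) (B := BadSplit G K τ (ε₁ / 2))
    (x := (2 * d + 4) * Real.exp (-(2 * c) * Fintype.card V))
    (y := 3 * Real.exp (-(2 * c) * Fintype.card V)) ?_
    (fun s => (hbad' s).trans (mul_le_mul_of_nonneg_left (hexp_le h20) (by norm_num)))
    (hb₁'.trans (mul_le_mul_of_nonneg_left (hexp_le h21) hd4))
    (hb₂'.trans (mul_le_mul_of_nonneg_left (hexp_le h22) hd4))
    (hb₃'.trans (mul_le_mul_of_nonneg_left (hexp_le h23) hd4))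
    (hb₄'.trans (mul_le_mul_of_nonneg_left (hexp_le h24) hd4)))
  · linarith only [hfin]
  intro s _ t _ hs₁ hs₂ hu₁ hu₂ hnb c' hc' k hk hkd
  have hτn : Fintype.card V / (r + 1 : ℝ) + 1 ≤ τ * Fintype.card V :=
    div_add_one_le_mul hτpos ((div_lt_iff₀ hτpos).1 hi) (by exact_mod_cast hri)
      (by linarith only [hmul hτpos, hN1])
  have hmain := abs_core_degree_sub_alive_le_of_typical hG (by omega) hp1.le hp₁0.le hp₁p.le hdiff
    hq0 hηε hε₁T (hj₀ j hj0) (hj₀ r (hj0.trans hrj)) hdie₁ hg hrj hjK hτj hτn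
    (by linarith only [hmul hε₁, hN2]) (by linarith only [hmul hT4, hN4])
    (by linarith only [hmul hT4, hN3]) hs₁ hs₂ hu₁ hu₂ hnb hc' hk
  have hbin := hr₀ r hrr k (by omega) hkd
  have hN_k := hu₂.2 k hkd
  generalize (d.choose k : ℝ) * p ^ k * (1 - q) ^ k * q / (1 - p + p * q) ^ (k - 1) = β at hbin ⊢
  generalize (d.choose k : ℝ) * (p * (1 - dieProb d p r)) ^ k
    * (1 - p * (1 - dieProb d p r)) ^ (d - k) = β' at hbin hN_k
  exact abs_div_sub_lt hn (a := (d + 2) * ε₁) (by rwa [← mul_assoc] at hmain) hN_k hbin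
    (by linarith only [hε₁ε, hηε₁, hε₁, hε])

end Percolation

end
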